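/- arXiv:0811.0044 — 15 statements merged into one kernel-verified Lean document; each statement's English description precedes it below -/
import Mathlib

section
/- For every integer m ≥ 3, the inequality 2·S(m−2) < P(m) − 2 holds; that is, the largest color S(m−2) appearing in the canonical coloring satisfies S(m−2) < P(m)/2 − 1. -/
/-- The Pell numbers: P 1 = 1, P 2 = 2, P (m+2) = 2 * P (m+1) + P m. -/
def pell : ℕ → ℕ
  | 0 => 0
  | 1 => 1
  | n + 2 => 2 * pell (n + 1) + pell n

/-- The sequence S: S 1 = 1, S 2 = 3, S (n+2) = 2 * S (n+1) + S n + 1. -/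
def S : ℕ → ℕ
  | 0 => 0
  | 1 => 1
  | n + 2 => 2 * S (n + 1) + S n + 1

/-!
The sequences are tied together by `2 * S n + 1 = pell n + pell (n + 1)`. Adding `pell (n + 1)` to
both sides turns the right-hand side into `pell (n + 2)`, so the gap between `pell (n + 2)` and
`2 * S n` is `pell (n + 1) + 1`, which is at least `3` for `n ≥ 1`.
-/

theorem two_mul_S_add_one (n : ℕ) : 2 * S n + 1 = pell n + pell (n + 1) := by
  induction n using Nat.twoStepInduction with
  | zero => rfl
  | one => rfl
  | more n ih ih_succ =>
    simp only [S, pell] at ih ih_succ ⊢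
    lia

theorem pell_monotone : Monotone pell := by
  refine monotone_nat_of_le_succ fun n ↦ ?_
  cases n with
  | zero => exact zero_le_one
  | succ n =>
    rw [pell]
    lia

theorem pell_add_two_eq_two_mul_S_add (n : ℕ) : pell (n + 2) = 2 * S n + pell (n + 1) + 1 := by
  have h_sum := two_mul_S_add_one n
  rw [pell]
  lia

/-- For every m ≥ 3, 2·S(m−2) < P(m) − 2, i.e. S(m−2) < P(m)/2 − 1. -/
theorem stmt_0 (m : ℕ) (hm : 3 ≤ m) : 2 * S (m - 2) < pell m - 2 := by
  obtain ⟨n, rfl⟩ := Nat.exists_eq_add_of_le' (show 2 ≤ m by lia)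
  have two_le_pell : 2 ≤ pell (n + 1) := pell_monotone (show 2 ≤ n + 1 by lia)
  rw [Nat.add_sub_cancel, pell_add_two_eq_two_mul_S_add]
  lia
end

section
/- For every integer n ≥ 3, the number L(2n) − 2 is not prime. (This is the determinant of the Turk's Head Knot THK(3,n), so THK(3,n) has composite determinant.) -/
/-- The Lucas numbers: L 0 = 2, L 1 = 1, L (n+2) = L (n+1) + L n. -/
def lucas : ℕ → ℕ
  | 0 => 2
  | 1 => 1
  | n + 2 => lucas (n + 1) + lucas n

/-!
Binet's formula `L n = φ ^ n + ψ ^ n` and `φ * ψ = -1` give `(L n) ^ 2 = L (2 * n) + 2 * (-1) ^ n`.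
Hence `L (2 * n) - 2` is the square `(L n) ^ 2` for odd `n`, and the difference of squares
`(L n) ^ 2 - 2 ^ 2` for even `n`.
-/

open scoped goldenRatio

theorem lucas_zero : lucas 0 = 2 := rfl

theorem lucas_one : lucas 1 = 1 := rfl

theorem lucas_add_two (n : ℕ) : lucas (n + 2) = lucas (n + 1) + lucas n := rfl

theorem lucas_pos : ∀ n, 0 < lucas n
  | 0 => Nat.two_pos
  | 1 => Nat.one_pos
  | n + 2 => Nat.add_pos_right (lucas (n + 1)) (lucas_pos n)

theorem lt_lucas {n : ℕ} (hn : 2 ≤ n) : n < lucas n := by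
  induction n, hn using Nat.le_induction with
  | base => decide
  | succ n hn ih =>
    obtain ⟨k, rfl⟩ : ∃ k, n = k + 1 := Nat.exists_eq_add_of_le' (by lia)
    calc
      k + 2 < lucas (k + 1) + 1 := Nat.add_lt_add_right ih 1
      _ ≤ lucas (k + 1) + lucas k := Nat.add_le_add_left (lucas_pos k) _

theorem coe_lucas_eq : ∀ n, (lucas n : ℝ) = φ ^ n + ψ ^ n
  | 0 => by norm_num [lucas_zero]
  | 1 => by simp [lucas_one, Real.goldenRatio_add_goldenConj]
  | n + 2 => by
    rw [lucas_add_two, Nat.cast_add, coe_lucas_eq (n + 1), coe_lucas_eq n, pow_add φ n 2,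
      pow_add ψ n 2, Real.goldenRatio_sq, Real.goldenConj_sq]
    ring

theorem lucas_mul_lucas_add (n k : ℕ) :
    (lucas n * lucas (n + k) : ℤ) = lucas (2 * n + k) + (-1) ^ n * lucas k := by
  rify
  simp only [coe_lucas_eq, ← Real.goldenRatio_mul_goldenConj, mul_pow]
  ring

theorem lucas_sq (n : ℕ) : (lucas n ^ 2 : ℤ) = lucas (2 * n) + 2 * (-1) ^ n := by
  simpa only [add_zero, lucas_zero, Nat.cast_ofNat, ← sq, mul_comm] using lucas_mul_lucas_add n 0

theorem lucas_two_mul_sub_two_of_odd {n : ℕ} (hn : Odd n) :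
    lucas (2 * n) - 2 = lucas n ^ 2 := by
  have h := lucas_sq n
  rw [hn.neg_one_pow] at h
  lia

theorem lucas_two_mul_sub_two_of_even {n : ℕ} (hn : Even n) :
    lucas (2 * n) - 2 = (lucas n + 2) * (lucas n - 2) := by
  have h := lucas_sq n
  rw [hn.neg_one_pow] at h
  rw [← Nat.sq_sub_sq]
  lia

/-- For every n ≥ 3, the determinant L(2n) − 2 of THK(3,n) is not prime. -/
theorem stmt_3 (n : ℕ) (hn : 3 ≤ n) : ¬ Nat.Prime (lucas (2 * n) - 2) := by
  have h_lucas : 3 < lucas n := hn.trans_lt (lt_lucas (by lia))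
  rcases Nat.even_or_odd n with h_even | h_odd
  · rw [lucas_two_mul_sub_two_of_even h_even]
    exact Nat.not_prime_mul (by lia) (by lia)
  · rw [lucas_two_mul_sub_two_of_odd h_odd]
    exact Nat.Prime.not_prime_pow le_rfl
end

section
/- Let W_n be the wheel graph on n+1 vertices: the simple graph on Fin (n+1) in which vertex 0 (the hub) is adjacent to every vertex i with 1 ≤ i ≤ n, and the rim vertices 1, 2, …, n form a cycle (i adjacent to i+1 for 1 ≤ i ≤ n−1, and n adjacent to 1). For every n ≥ 3, the number of spanning trees of W_n (the number of spanning subgraphs H of W_n such that the graph underlying H is a tree) equals L(2n) − 2. -/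
/-- The wheel graph on `n+1` vertices: vertex `0` is the hub, adjacent to every
vertex `i` with `1 ≤ i ≤ n`, and the rim vertices `1, …, n` form a cycle
(`i` adjacent to `i+1` for `1 ≤ i ≤ n−1`, and `n` adjacent to `1`). -/
def wheel (n : ℕ) : SimpleGraph (Fin (n + 1)) :=
  SimpleGraph.fromRel (fun a b =>
    a = 0 ∨ (1 ≤ a.val ∧ a.val + 1 = b.val) ∨ (a.val = n ∧ b.val = 1))

/-!
Root a spanning tree of a graph at `r` and send every vertex to its neighbour on the way to `r`.
This identifies spanning trees with the maps that fix `r`, move every other vertex along an edge,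
and have all orbits ending at `r`.

For the wheel rooted at the hub, such a map sends each rim vertex to the hub, to the next rim
vertex or to the previous one. Its orbits reach the hub unless two neighbouring rim vertices point
at each other or all of them point the same way round the rim. So one counts the cyclic words in
three letters that avoid one pair of adjacent letters, and subtracts the two constant words without
the letter for the hub. The number of such cyclic words of length `n` is the trace of `M ^ n` for
the transfer matrix `M`, and `M ^ 3 + M = 3 M ^ 2` gives these traces the recurrence of the
even-indexed Lucas numbers.
-/

section ParentMap

open SimpleGraph

variable {V : Type*} {G G' : SimpleGraph V} {r v : V} {p q : V → V}

/-- `p` is the parent map of a spanning tree of `G` rooted at `r`. The root is its own parent, so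
that `p` is a total function that can be iterated. -/
structure IsParentMap (G : SimpleGraph V) (r : V) (p : V → V) : Prop where
  map_root : p r = r
  adj : ∀ v, v ≠ r → G.Adj v (p v)
  exists_iterate_eq : ∀ v, ∃ k, p^[k] v = r

/-- The graph whose edges join each vertex to its parent under `p`; a fixed point of `p` contributes
no edge. -/
def parentGraph (p : V → V) : SimpleGraph V :=
  fromRel fun v w => p v = w

theorem parentGraph_adj {v w : V} :
    (parentGraph p).Adj v w ↔ v ≠ w ∧ (p v = w ∨ p w = v) :=
  fromRel_adj _ _ _

namespace IsParentMap

theorem mono (hp : IsParentMap G r p) (h : G ≤ G') : IsParentMap G' r p :=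
  ⟨hp.map_root, fun v hv => h (hp.adj v hv), hp.exists_iterate_eq⟩

theorem induction (hp : IsParentMap G r p) {P : V → Prop} (root : P r)
    (step : ∀ v, v ≠ r → P (p v) → P v) (v : V) : P v := by
  obtain ⟨k, hk⟩ := hp.exists_iterate_eq v
  induction k generalizing v with
  | zero => obtain rfl : v = r := hk; exact root
  | succ k ih =>
    by_cases hv : v = r
    · exact hv ▸ root
    · exact step v hv (ih (p v) hk)

theorem eq_root_of_map_map_eq (hp : IsParentMap G r p) : p (p v) = v → v = r := by
  induction v using hp.induction with
  | root => exact fun _ => rfl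
  | step v _ ih =>
    intro hv
    have hpv : p v = r := ih (congrArg p hv)
    rw [← hv, hpv, hp.map_root]

theorem exists_ne_map_eq_root [Nontrivial V] (hp : IsParentMap G r p) : ∃ v, v ≠ r ∧ p v = r := by
  obtain ⟨w, hw⟩ := exists_ne r
  by_contra! h
  exact hw (hp.induction (P := (· = r)) rfl (fun v hv hpv => absurd hpv (h v hv)) w)

theorem parentGraph_adj_map (hp : IsParentMap G r p) (hv : v ≠ r) :
    (parentGraph p).Adj v (p v) :=
  parentGraph_adj.2 ⟨(hp.adj v hv).ne, .inl rfl⟩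

theorem parentGraph_le (hp : IsParentMap G r p) : parentGraph p ≤ G := by
  have adj_of_map_eq {v w : V} (hne : v ≠ w) (hvw : p v = w) : G.Adj v w := by
    subst hvw
    exact hp.adj v fun hv => hne (by rw [hv, hp.map_root])
  intro v w h
  obtain ⟨hne, hvw | hwv⟩ := parentGraph_adj.1 h
  · exact adj_of_map_eq hne hvw
  · exact (adj_of_map_eq hne.symm hwv).symm

theorem connected_parentGraph (hp : IsParentMap G r p) : (parentGraph p).Connected := by
  have reachable_root (v : V) : (parentGraph p).Reachable v r := by
    induction v using hp.induction with
    | root => rfl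
    | step v hv ih => exact (hp.parentGraph_adj_map hv).reachable.trans ih
  have : Nonempty V := ⟨r⟩
  exact ⟨fun v w => (reachable_root v).trans (reachable_root w).symm⟩

/-- The edge from `v` to its parent is the only one leaving the set of descendants of `v`. -/
theorem adj_map_of_connected_le (hp : IsParentMap G r p) (hconn : G'.Connected)
    (hle : G' ≤ parentGraph p) (hv : v ≠ r) : G'.Adj v (p v) := by
  let descendants : Set V := {w | ∃ k, p^[k] w = v}
  have root_notMem : r ∉ descendants := fun ⟨k, hk⟩ =>
    hv (hk.symm.trans (Function.iterate_fixed hp.map_root k))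
  obtain ⟨walk⟩ := hconn v r
  obtain ⟨⟨⟨a, b⟩, hab⟩, -, ⟨k, hk⟩, hb⟩ :=
    walk.exists_boundary_dart descendants ⟨0, rfl⟩ root_notMem
  change G'.Adj a b at hab
  rcases (parentGraph_adj.1 (hle hab)).2 with rfl | rfl
  · cases k with
    | zero => obtain rfl : a = v := hk; exact hab
    | succ k => exact absurd ⟨k, hk⟩ hb
  · exact absurd ⟨k + 1, hk⟩ hb

theorem isTree_parentGraph (hp : IsParentMap G r p) : (parentGraph p).IsTree := by
  refine isTree_iff_minimal_connected.2 ⟨hp.connected_parentGraph, fun T hT hle => ?_⟩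
  exact (IsParentMap.mk hp.map_root (fun _ => hp.adj_map_of_connected_le hT hle)
    hp.exists_iterate_eq).parentGraph_le

theorem eq_of_parentGraph_eq (hp : IsParentMap G r p) (hq : IsParentMap G' r q)
    (h : parentGraph p = parentGraph q) : p = q := by
  funext v
  induction v using hq.induction with
  | root => rw [hp.map_root, hq.map_root]
  | step v hv ih =>
    have hadj : (parentGraph p).Adj v (q v) := h ▸ hq.parentGraph_adj_map hv
    rcases (parentGraph_adj.1 hadj).2 with hpv | hpqv
    · exact hpv
    · exact absurd (hq.eq_root_of_map_map_eq (ih ▸ hpqv)) hv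

end IsParentMap

theorem exists_adj_dist_lt_of_connected (hG : G.Connected) (hv : v ≠ r) :
    ∃ w, G.Adj v w ∧ G.dist w r < G.dist v r := by
  obtain ⟨walk, hwalk⟩ := hG.exists_walk_length_eq_dist v r
  cases walk with
  | nil => exact absurd rfl hv
  | cons hadj tail =>
    refine ⟨_, hadj, ?_⟩
    rw [← hwalk, Walk.length_cons]
    exact Nat.lt_succ_of_le (dist_le tail)

theorem exists_isParentMap_of_connected (hG : G.Connected) (r : V) :
    ∃ p, IsParentMap G r p := by
  classical
  choose! closer hadj hlt using fun v (hv : v ≠ r) => exists_adj_dist_lt_of_connected hG hv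
  let p := Function.update closer r r
  have p_root : p r = r := Function.update_self ..
  have p_of_ne {v : V} (hv : v ≠ r) : p v = closer v := Function.update_of_ne hv ..
  refine ⟨p, p_root, fun v hv => p_of_ne hv ▸ hadj v hv, fun v => ?_⟩
  induction hd : G.dist v r using Nat.strong_induction_on generalizing v with
  | h d ih =>
    by_cases hv : v = r
    · exact ⟨0, hv⟩
    · obtain ⟨k, hk⟩ := ih _ (hd ▸ hlt v hv) (closer v) rfl
      exact ⟨k + 1, by rwa [Function.iterate_succ_apply, p_of_ne hv]⟩

theorem exists_parentGraph_eq_of_isTree (hG : G.IsTree) (r : V) :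
    ∃ p, IsParentMap G r p ∧ parentGraph p = G := by
  obtain ⟨p, hp⟩ := exists_isParentMap_of_connected hG.connected r
  exact ⟨p, hp, hp.parentGraph_le.antisymm
    ((isTree_iff_minimal_connected.1 hG).2 hp.connected_parentGraph hp.parentGraph_le)⟩

theorem isTree_coe_iff_isTree_spanningCoe {H : G.Subgraph} (hH : H.IsSpanning) :
    H.coe.IsTree ↔ H.spanningCoe.IsTree :=
  (H.spanningCoeEquivCoeOfSpanning hH).isTree_iff.symm

theorem card_spanningTrees_eq_card_parentMaps (G : SimpleGraph V) (r : V) :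
    Nat.card {H : G.Subgraph // H.IsSpanning ∧ H.coe.IsTree} =
      Nat.card {p : V → V // IsParentMap G r p} := by
  symm
  refine Nat.card_eq_of_bijective
    (fun p => ⟨toSubgraph (parentGraph p.1) p.2.parentGraph_le,
      toSubgraph.isSpanning _ _,
      (isTree_coe_iff_isTree_spanningCoe (toSubgraph.isSpanning _ _)).2
        p.2.isTree_parentGraph⟩) ⟨fun p q hpq => ?_, fun ⟨H, hspan, htree⟩ => ?_⟩
  · have : parentGraph p.1 = parentGraph q.1 := congrArg (fun H => H.1.spanningCoe) hpq
    exact Subtype.ext (p.2.eq_of_parentGraph_eq q.2 this)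
  · obtain ⟨p, hp, hpH⟩ :=
      exists_parentGraph_eq_of_isTree ((isTree_coe_iff_isTree_spanningCoe hspan).1 htree) r
    refine ⟨⟨p, hp.mono H.spanningCoe_le⟩, Subtype.ext (Subgraph.ext hspan.verts_eq_univ.symm ?_)⟩
    exact congrArg SimpleGraph.Adj hpH

end ParentMap

section CyclicWords

variable {α : Type*} [Fintype α] [DecidableEq α]

theorem sum_prod_path_mul_eq_trace {R : Type*} [CommSemiring R] (M N : Matrix α α R) (m : ℕ) :
    ∑ f : Fin (m + 1) → α,
        (∏ i : Fin m, M (f i.castSucc) (f i.succ)) * N (f (Fin.last m)) (f 0) =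
      (N * M ^ m).trace := by
  induction m generalizing N with
  | zero =>
    simp only [Finset.univ_eq_empty, Finset.prod_empty, one_mul, pow_zero, mul_one, Matrix.trace,
      Matrix.diag]
    exact Fintype.sum_equiv (Equiv.funUnique (Fin 1) α) _ _ fun _ => rfl
  | succ m ih =>
    rw [pow_succ', ← mul_assoc, ← ih (N * M), ← (Fin.consEquiv fun _ => α).sum_comp,
      Fintype.sum_prod_type, Finset.sum_comm]
    refine Finset.sum_congr rfl fun g _ => ?_
    rw [Matrix.mul_apply, Finset.mul_sum]
    refine Finset.sum_congr rfl fun a _ => ?_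
    simp only [Fin.consEquiv_apply, Fin.prod_univ_succ, ← Fin.succ_last, Fin.cons_succ,
      Fin.cons_zero, Fin.castSucc_zero, ← Fin.succ_castSucc]
    ring

theorem trace_pow_eq_sum_prod_cyclic {R : Type*} [CommSemiring R] (M : Matrix α α R) (n : ℕ)
    [NeZero n] : (M ^ n).trace = ∑ f : Fin n → α, ∏ i, M (f i) (f (i + 1)) := by
  obtain ⟨m, rfl⟩ := Nat.exists_eq_succ_of_ne_zero (NeZero.ne n)
  rw [pow_succ', ← sum_prod_path_mul_eq_trace]
  refine Finset.sum_congr rfl fun f _ => ?_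
  rw [Fin.prod_univ_castSucc]
  simp only [Fin.coeSucc_eq_succ, Fin.last_add_one]

theorem card_cyclicWords_eq_trace (n : ℕ) [NeZero n] (rel : α → α → Prop) [DecidableRel rel] :
    Nat.card {f : Fin n → α // ∀ i, rel (f i) (f (i + 1))} =
      ((Matrix.of fun a b => if rel a b then 1 else 0 : Matrix α α ℕ) ^ n).trace := by
  rw [trace_pow_eq_sum_prod_cyclic, Nat.card_eq_fintype_card, Fintype.card_subtype,
    Finset.card_filter]
  simp only [Matrix.of_apply, Finset.prod_boole, Finset.mem_univ, true_imp_iff]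

end CyclicWords

section WheelWords

/-- The possible parents of a rim vertex of a wheel: the hub, the next or the previous rim
vertex. -/
inductive WheelStep
  | hub
  | next
  | prev
  deriving DecidableEq

open WheelStep

instance : Fintype WheelStep :=
  ⟨{hub, next, prev}, fun s => by cases s <;> decide⟩

/-- The pairs of steps that two consecutive rim vertices may take without being each other's
parents. -/
def WheelStep.Compatible (a b : WheelStep) : Prop :=
  ¬(a = next ∧ b = prev)

instance : DecidableRel Compatible := fun a b =>
  inferInstanceAs (Decidable ¬(a = next ∧ b = prev))

/-- The cyclic words of steps that form no cycle: neither between two consecutive rim vertices nor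
round the whole rim. -/
structure IsAcyclicWord {n : ℕ} [NeZero n] (f : Fin n → WheelStep) : Prop where
  compatible : ∀ i, (f i).Compatible (f (i + 1))
  ne_next : f ≠ fun _ => next
  ne_prev : f ≠ fun _ => prev

/-- The transfer matrix of compatible steps. -/
def transferMatrix : Matrix WheelStep WheelStep ℕ :=
  Matrix.of fun a b => if a.Compatible b then 1 else 0

theorem transferMatrix_pow_three_add :
    transferMatrix ^ 3 + transferMatrix = 3 • transferMatrix ^ 2 := by
  decide

theorem lucas_add_four_add (n : ℕ) : lucas (n + 4) + lucas n = 3 * lucas (n + 2) := by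
  simp only [lucas]
  ring

theorem trace_transferMatrix_pow_succ (n : ℕ) :
    (transferMatrix ^ (n + 1)).trace = lucas (2 * (n + 1)) := by
  induction n using Nat.twoStepInduction with
  | zero => decide
  | one => decide
  | more n ih₁ ih₂ =>
    have trace_rec : (transferMatrix ^ (n + 3)).trace + (transferMatrix ^ (n + 1)).trace =
        3 * (transferMatrix ^ (n + 2)).trace := by
      have h := congrArg (fun A => (transferMatrix ^ n * A).trace) transferMatrix_pow_three_add
      simpa only [mul_add, mul_smul_comm, Matrix.trace_add, Matrix.trace_smul, smul_eq_mul,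
        ← pow_add, ← pow_succ] using h
    have lucas_rec := lucas_add_four_add (2 * (n + 1))
    rw [ih₁, ih₂] at trace_rec
    exact add_right_cancel (trace_rec.trans lucas_rec.symm)

variable {n : ℕ} [NeZero n]

theorem card_compatibleWords :
    Nat.card {f : Fin n → WheelStep // ∀ i, (f i).Compatible (f (i + 1))} = lucas (2 * n) := by
  obtain ⟨m, rfl⟩ := Nat.exists_eq_succ_of_ne_zero (NeZero.ne n)
  rw [card_cyclicWords_eq_trace]
  exact trace_transferMatrix_pow_succ m

theorem card_acyclicWords :
    Nat.card {f : Fin n → WheelStep // IsAcyclicWord f} = lucas (2 * n) - 2 := by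
  let compatibleWords : Set (Fin n → WheelStep) := {f | ∀ i, (f i).Compatible (f (i + 1))}
  let constants : Set (Fin n → WheelStep) := {fun _ => next, fun _ => prev}
  have constants_subset : constants ⊆ compatibleWords := by
    rintro f (rfl | rfl) i <;> simp [Compatible]
  have ncard_constants : constants.ncard = 2 :=
    Set.ncard_pair fun h => absurd (congrFun h 0) (by decide)
  have acyclic_eq : {f : Fin n → WheelStep | IsAcyclicWord f} = compatibleWords \ constants := by
    ext f
    simp only [Set.mem_sdiff, constants, Set.mem_insert_iff, Set.mem_singleton_iff, not_or]
    exact ⟨fun h => ⟨h.compatible, h.ne_next, h.ne_prev⟩, fun h => ⟨h.1, h.2.1, h.2.2⟩⟩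
  rw [← card_compatibleWords (n := n), ← ncard_constants]
  exact (congrArg Set.ncard acyclic_eq).trans (Set.ncard_sdiff constants_subset)

end WheelWords

section Wheel

open WheelStep

variable {n : ℕ} [NeZero n]

/-- The neighbour of the rim vertex `i.succ` in the given direction; the rim vertices `1, …, n` are
indexed by `Fin n`, in which `i + 1` wraps round. -/
def rimNeighbor (i : Fin n) : WheelStep → Fin (n + 1)
  | hub => 0
  | next => (i + 1).succ
  | prev => (i - 1).succ

theorem fin_eq_add_one_iff {i j : Fin n} :
    j = i + 1 ↔ i.val + 1 = j.val ∨ i.val + 1 = n ∧ j.val = 0 := by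
  obtain ⟨m, rfl⟩ := Nat.exists_eq_succ_of_ne_zero (NeZero.ne n)
  rw [Fin.ext_iff, Fin.val_add_one]
  split_ifs with h
  · subst h
    rw [Fin.val_last]
    omega
  · have : i.val ≠ m := fun h' => h (Fin.ext h')
    omega

theorem fin_add_one_ne_sub_one (hn : 3 ≤ n) (i : Fin n) : i + 1 ≠ i - 1 := by
  intro h
  have val_succ := fin_eq_add_one_iff.1 (Eq.refl (i + 1))
  have val_succ_succ := fin_eq_add_one_iff.1 (eq_sub_iff_add_eq.1 h).symm
  omega

theorem wheel_adj_succ_zero (i : Fin n) : (wheel n).Adj i.succ 0 := by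
  simp [wheel]

theorem wheel_adj_succ_succ (hn : 2 ≤ n) {i j : Fin n} :
    (wheel n).Adj i.succ j.succ ↔ j = i + 1 ∨ j = i - 1 := by
  rw [eq_sub_iff_add_eq, eq_comm (b := i), fin_eq_add_one_iff, fin_eq_add_one_iff]
  simp only [wheel, SimpleGraph.fromRel_adj, ne_eq, Fin.val_succ, Fin.ext_iff, Fin.val_zero]
  omega

theorem wheel_adj_succ_iff (hn : 2 ≤ n) {i : Fin n} {v : Fin (n + 1)} :
    (wheel n).Adj i.succ v ↔ ∃ s, rimNeighbor i s = v := by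
  constructor
  · intro h
    cases v using Fin.cases with
    | zero => exact ⟨hub, rfl⟩
    | succ j =>
      rcases (wheel_adj_succ_succ hn).1 h with rfl | rfl
      exacts [⟨next, rfl⟩, ⟨prev, rfl⟩]
  · rintro ⟨_ | _ | _, rfl⟩
    exacts [wheel_adj_succ_zero i, (wheel_adj_succ_succ hn).2 (.inl rfl),
      (wheel_adj_succ_succ hn).2 (.inr rfl)]

theorem rimNeighbor_injective (hn : 3 ≤ n) (i : Fin n) : Function.Injective (rimNeighbor i) := by
  have hne := fin_add_one_ne_sub_one hn i
  rintro (_ | _ | _) (_ | _ | _) h <;>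
    simp_all [rimNeighbor, Fin.succ_ne_zero, (Fin.succ_ne_zero _).symm, hne.symm]

/-- The map that fixes the hub and moves each rim vertex by the corresponding letter of `f`. -/
def wheelParent (f : Fin n → WheelStep) : Fin (n + 1) → Fin (n + 1) :=
  Fin.cases 0 fun i => rimNeighbor i (f i)

theorem wheelParent_zero (f : Fin n → WheelStep) : wheelParent f 0 = 0 := rfl

theorem wheelParent_succ (f : Fin n → WheelStep) (i : Fin n) :
    wheelParent f i.succ = rimNeighbor i (f i) := rfl

theorem wheelParent_injective (hn : 3 ≤ n) : Function.Injective (wheelParent (n := n)) :=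
  fun _ _ h => funext fun i => rimNeighbor_injective hn i (congrFun h i.succ)

theorem exists_wheelParent_eq (hn : 2 ≤ n) {p : Fin (n + 1) → Fin (n + 1)}
    (hp : IsParentMap (wheel n) 0 p) : ∃ f, wheelParent f = p := by
  choose f hf using fun i : Fin n => (wheel_adj_succ_iff hn).1 (hp.adj i.succ i.succ_ne_zero)
  refine ⟨f, funext fun v => ?_⟩
  cases v using Fin.cases with
  | zero => exact hp.map_root.symm
  | succ i => exact hf i

theorem isAcyclicWord_of_isParentMap {G : SimpleGraph (Fin (n + 1))} {f : Fin n → WheelStep}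
    (hf : IsParentMap G 0 (wheelParent f)) : IsAcyclicWord f := by
  obtain ⟨v, hv, hvf⟩ := hf.exists_ne_map_eq_root
  obtain ⟨i, rfl⟩ := Fin.exists_succ_eq.2 hv
  have step_eq_hub : f i = hub := by
    rw [wheelParent_succ] at hvf
    cases h : f i <;> simp [h, rimNeighbor, Fin.succ_ne_zero] at hvf ⊢
  refine ⟨fun j ⟨hj, hj'⟩ => j.succ_ne_zero (hf.eq_root_of_map_map_eq ?_), ?_, ?_⟩
  · simp only [wheelParent_succ, hj, hj', rimNeighbor, add_sub_cancel_right]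
  all_goals rintro rfl; cases step_eq_hub

/-- The rim vertex `i.succ` never reaches the hub by following the steps in `f`. -/
def IsStuck (f : Fin n → WheelStep) (i : Fin n) : Prop :=
  ∀ k, (wheelParent f)^[k] i.succ ≠ 0

namespace IsStuck

variable {f : Fin n → WheelStep} {i j : Fin n}

theorem ne_hub (hi : IsStuck f i) : f i ≠ hub := fun h =>
  hi 1 (by rw [Function.iterate_one, wheelParent_succ, h, rimNeighbor])

theorem of_wheelParent_eq (hi : IsStuck f i) (h : wheelParent f i.succ = j.succ) : IsStuck f j :=
  fun k hk => hi (k + 1) (by rw [Function.iterate_succ_apply, h, hk])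

theorem next_add_one (hf : (f i).Compatible (f (i + 1))) (hi : f i = next ∧ IsStuck f i) :
    f (i + 1) = next ∧ IsStuck f (i + 1) := by
  have hstuck : IsStuck f (i + 1) :=
    hi.2.of_wheelParent_eq (by rw [wheelParent_succ, hi.1, rimNeighbor])
  refine ⟨?_, hstuck⟩
  cases h : f (i + 1) with
  | hub => exact absurd h hstuck.ne_hub
  | next => rfl
  | prev => exact absurd ⟨hi.1, h⟩ hf

theorem prev_of_add_one (hf : (f i).Compatible (f (i + 1)))
    (hi : f (i + 1) = prev ∧ IsStuck f (i + 1)) : f i = prev ∧ IsStuck f i := by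
  have hstuck : IsStuck f i :=
    hi.2.of_wheelParent_eq (by rw [wheelParent_succ, hi.1, rimNeighbor, add_sub_cancel_right])
  refine ⟨?_, hstuck⟩
  cases h : f i with
  | hub => exact absurd h hstuck.ne_hub
  | next => exact absurd ⟨h, hi.1⟩ hf
  | prev => rfl

end IsStuck

theorem forall_fin_of_add_one {P : Fin n → Prop} {i : Fin n} (base : P i)
    (step : ∀ j, P j → P (j + 1)) (j : Fin n) : P j := by
  open scoped Fin.CommRing Fin.NatCast in
  have add_natCast (k : ℕ) : P (i + k) := by
    induction k with
    | zero => simpa using base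
    | succ k ih => rw [Nat.cast_succ, ← add_assoc]; exact step _ ih
  simpa only [Fin.cast_val_eq_self, add_sub_cancel] using add_natCast (j - i).val

theorem not_isStuck {f : Fin n → WheelStep} (hf : IsAcyclicWord f) (i : Fin n) :
    ¬IsStuck f i := by
  intro hi
  cases hfi : f i with
  | hub => exact hi.ne_hub hfi
  | next =>
    have all_next (j : Fin n) : f j = next ∧ IsStuck f j := by
      induction j using forall_fin_of_add_one (i := i) with
      | base => exact ⟨hfi, hi⟩
      | step j hj => exact IsStuck.next_add_one (hf.compatible j) hj
    exact hf.ne_next (funext fun j => (all_next j).1)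
  | prev =>
    obtain ⟨j, hj⟩ := Function.ne_iff.1 hf.ne_prev
    have none_prev (k : Fin n) : ¬(f k = prev ∧ IsStuck f k) := by
      induction k using forall_fin_of_add_one (i := j) with
      | base => exact fun h => hj h.1
      | step k hk => exact mt (IsStuck.prev_of_add_one (hf.compatible k)) hk
    exact none_prev i ⟨hfi, hi⟩

theorem exists_iterate_wheelParent_eq_zero {f : Fin n → WheelStep} (hf : IsAcyclicWord f)
    (v : Fin (n + 1)) : ∃ k, (wheelParent f)^[k] v = 0 := by
  cases v using Fin.cases with
  | zero => exact ⟨0, rfl⟩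
  | succ i => simpa only [IsStuck, not_forall, not_not] using not_isStuck hf i

theorem isParentMap_wheelParent_iff (hn : 2 ≤ n) {f : Fin n → WheelStep} :
    IsParentMap (wheel n) 0 (wheelParent f) ↔ IsAcyclicWord f := by
  refine ⟨isAcyclicWord_of_isParentMap, fun hf =>
    ⟨wheelParent_zero f, fun v hv => ?_, exists_iterate_wheelParent_eq_zero hf⟩⟩
  obtain ⟨i, rfl⟩ := Fin.exists_succ_eq.2 hv
  exact (wheel_adj_succ_iff hn).2 ⟨f i, rfl⟩

theorem card_parentMaps_wheel (hn : 3 ≤ n) :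
    Nat.card {p // IsParentMap (wheel n) 0 p} =
      Nat.card {f : Fin n → WheelStep // IsAcyclicWord f} := by
  have hn2 : 2 ≤ n := by omega
  have image_eq : wheelParent '' {f | IsAcyclicWord f} = {p | IsParentMap (wheel n) 0 p} := by
    ext p
    constructor
    · rintro ⟨f, hf, rfl⟩
      exact (isParentMap_wheelParent_iff hn2).2 hf
    · intro hp
      obtain ⟨f, rfl⟩ := exists_wheelParent_eq hn2 hp
      exact ⟨f, (isParentMap_wheelParent_iff hn2).1 hp, rfl⟩
  have := Nat.card_image_of_injective (wheelParent_injective hn) {f | IsAcyclicWord f}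
  rwa [image_eq] at this

end Wheel

/-- For n ≥ 3, the number of spanning trees of the wheel graph on n+1 vertices
is L(2n) − 2. -/
theorem stmt_4 (n : ℕ) (hn : 3 ≤ n) :
    Nat.card {H : (wheel n).Subgraph // H.IsSpanning ∧ H.coe.IsTree} =
      lucas (2 * n) - 2 := by
  have : NeZero n := ⟨by omega⟩
  rw [card_spanningTrees_eq_card_parentMaps (wheel n) 0, card_parentMaps_wheel hn,
    card_acyclicWords]
end

section
/- Let m ≥ 4 be even and n ≥ 3. Then there exists an integer z > 1 such that (z : ℝ) = ∏_{h=1}^{n−1} ∏_{k=1}^{m/2−1} (4·sin²(hπ/n) + 4·sin²(kπ/m)); that is, the double product of the real numbers 4 sin²(hπ/n) + 4 sin²(kπ/m) over 1 ≤ h ≤ n−1 and 1 ≤ k ≤ m/2 − 1 is an integer greater than one. -/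
open Real Finset

/-!
Let `S_N` be the rescaled Chebyshev polynomial of the second kind: it is monic with integer
coefficients and has the roots `2 cos (kπ / (N + 1))`, `1 ≤ k ≤ N`. Since
`4 sin² θ = 2 - 2 cos 2θ`, for `m = 2 (M + 1)` the product over `k` of `t + 4 sin² (kπ / m)` is
`S_M (t + 2)`. Since also `4 sin² θ = 4 - (2 cos θ)²`, for `n = N + 1` the product over `h` of
`S_M (4 sin² (hπ / n) + 2)` runs over the values of the integer polynomial `S_M (6 - X²)` at the
roots of `S_N`, so it is a resultant of two integer polynomials. Each of its `N` factors is at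
least `S_M (2) = M + 1`.
-/

section Resultant

open Polynomial

theorem map_resultant_eq_prod_eval₂ {R S ι : Type*} [CommRing R] [CommRing S] (φ : R →+* S)
    {f : R[X]} {s : Finset ι} {r : ι → S} (hf : f.map φ = ∏ i ∈ s, (X - C (r i))) (g : R[X]) :
    φ (resultant f g #s g.natDegree) = ∏ i ∈ s, g.eval₂ φ (r i) := by
  nontriviality S
  have hg : (g.map φ).natDegree ≤ g.natDegree := natDegree_map_le
  have hlead : ∏ i ∈ s, (X - C (r i)).leadingCoeff ≠ 0 := by simp
  have hcard : (∏ i ∈ s, (X - C (r i))).natDegree = #s := natDegree_finsetProd_X_sub_C_eq_card _ _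
  have hprod := resultant_prod_left s (fun i ↦ X - C (r i)) (g.map φ) g.natDegree hlead hg
  rw [hcard, ← hf, resultant_map_map] at hprod
  rw [hprod]
  refine prod_congr rfl fun i _ ↦ ?_
  rw [natDegree_X_sub_C, resultant_X_sub_C_left _ _ _ hg, eval_map]

end Resultant

section Chebyshev

open Polynomial
open Polynomial.Chebyshev hiding C C_mul

theorem chebyshevU_real_eq_prod (N : ℕ) :
    U ℝ N = C (2 ^ N) * ∏ k ∈ Icc 1 N, (X - C (cos (k * π / (N + 1)))) := by
  have hinj : Set.InjOn (fun k : ℕ ↦ cos ((k + 1) * π / (N + 1))) (range N) :=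
    (range N).nodup_map_iff_injOn.mp (roots_U_real_nodup N)
  have hcard : (U ℝ N).roots.card = (U ℝ N).natDegree := by
    rw [roots_U_real, natDegree_U_natCast, card_val, card_image_of_injOn hinj, card_range]
  have hfactor := C_leadingCoeff_mul_prod_multiset_X_sub_C hcard
  rw [leadingCoeff_U_natCast, roots_U_real] at hfactor
  rw [← hfactor, ← Finset.prod_eq_multiset_prod, prod_image hinj, range_eq_Ico,
    ← Ico_add_one_right_eq_Icc, ← prod_Ico_add' _ 0 N 1]
  simp only [Nat.cast_add, Nat.cast_one]

theorem chebyshevS_real_eq_prod (N : ℕ) :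
    S ℝ N = ∏ k ∈ Icc 1 N, (X - C (2 * cos (k * π / (N + 1)))) := by
  have hpow : (C (2 ^ N) : ℝ[X]) = ∏ _k ∈ Icc 1 N, C 2 := by simp
  rw [S_eq_U_comp_half_mul_X, chebyshevU_real_eq_prod, hpow, ← prod_mul_distrib,
    Polynomial.prod_comp]
  refine prod_congr rfl fun k _ ↦ ?_
  have htwo : (C 2 * C (⅟2) : ℝ[X]) = 1 := by rw [← C_mul, mul_invOf_self, C_1]
  simp only [mul_comp, C_comp, sub_comp, X_comp, C_mul]
  linear_combination X * htwo

theorem eval_chebyshevS_add_two_eq_prod (N : ℕ) (t : ℝ) :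
    (S ℝ N).eval (t + 2) = ∏ k ∈ Icc 1 N, (t + 4 * sin (k * π / (2 * (N + 1))) ^ 2) := by
  simp only [chebyshevS_real_eq_prod, eval_prod, eval_sub, eval_X, eval_C]
  refine prod_congr rfl fun k _ ↦ ?_
  have hangle : k * π / (N + 1) = 2 * (k * π / (2 * (N + 1))) := by field_simp
  rw [hangle, cos_two_mul, cos_sq']
  ring

theorem add_one_le_eval_chebyshevS_add_two (N : ℕ) {t : ℝ} (ht : 0 ≤ t) :
    N + 1 ≤ (S ℝ N).eval (t + 2) := by
  have hzero : (S ℝ N).eval (0 + 2) = N + 1 := by rw [zero_add, S_eval_two, Int.cast_natCast]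
  rw [← hzero, eval_chebyshevS_add_two_eq_prod, eval_chebyshevS_add_two_eq_prod]
  gcongr

theorem exists_intCast_eq_prod_aeval_four_mul_sin_sq (N : ℕ) (p : ℤ[X]) :
    ∃ z : ℤ, (z : ℝ) = ∏ h ∈ Icc 1 N, aeval (4 * sin (h * π / (N + 1)) ^ 2) p := by
  have hS : (S ℤ N).map (Int.castRingHom ℝ)
      = ∏ h ∈ Icc 1 N, (X - C (2 * cos (h * π / (N + 1)))) := by
    rw [map_S, chebyshevS_real_eq_prod]
  refine ⟨_, (map_resultant_eq_prod_eval₂ _ hS (p.comp (4 - X ^ 2))).trans ?_⟩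
  refine prod_congr rfl fun h _ ↦ ?_
  have hsin : 4 * sin (h * π / (N + 1)) ^ 2 = 4 - (2 * cos (h * π / (N + 1))) ^ 2 := by
    rw [sin_sq]
    ring
  rw [hsin, eval₂_comp, aeval_def, algebraMap_int_eq]
  simp only [eval₂_sub, eval₂_ofNat, eval₂_X_pow]

theorem exists_intCast_eq_prod_eval_chebyshevS (M N : ℕ) :
    ∃ z : ℤ, (z : ℝ) = ∏ h ∈ Icc 1 N, (S ℝ M).eval (4 * sin (h * π / (N + 1)) ^ 2 + 2) := by
  obtain ⟨z, hz⟩ := exists_intCast_eq_prod_aeval_four_mul_sin_sq N ((S ℤ M).comp (X + 2))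
  refine ⟨z, hz.trans (prod_congr rfl fun h _ ↦ ?_)⟩
  rw [aeval_comp, aeval_S, map_add, aeval_X, map_ofNat]

end Chebyshev

theorem stmt_5_general (m n : ℕ) (hm : m ≠ 0) (hme : Even m) (hn : n ≠ 0) :
    ∃ z : ℤ, ((m / 2 : ℕ) : ℤ) ^ (n - 1) ≤ z ∧
      (z : ℝ) = ∏ h ∈ Icc 1 (n - 1), ∏ k ∈ Icc 1 (m / 2 - 1),
        (4 * sin (h * π / n) ^ 2 + 4 * sin (k * π / m) ^ 2) := by
  obtain ⟨M, rfl⟩ : ∃ M, m = 2 * (M + 1) := by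
    obtain ⟨r, rfl⟩ := hme
    exact ⟨r - 1, by omega⟩
  obtain ⟨N, rfl⟩ := Nat.exists_eq_succ_of_ne_zero hn
  obtain ⟨z, hz⟩ := exists_intCast_eq_prod_eval_chebyshevS M N
  have hlower : ((M : ℝ) + 1) ^ N ≤ z := by
    rw [hz]
    calc ((M : ℝ) + 1) ^ N = ∏ _h ∈ Icc 1 N, ((M : ℝ) + 1) := by simp
      _ ≤ _ := by
        gcongr
        exact add_one_le_eval_chebyshevS_add_two M (by positivity)
  rw [Nat.mul_div_cancel_left _ two_pos]
  refine ⟨z, by exact_mod_cast hlower, ?_⟩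
  simpa [eval_chebyshevS_add_two_eq_prod] using hz

/-- For m ≥ 4 even and n ≥ 3, the double product
∏_{h=1}^{n−1} ∏_{k=1}^{m/2−1} (4 sin²(hπ/n) + 4 sin²(kπ/m))
is an integer greater than one. -/
theorem stmt_5 (m n : ℕ) (hm : 4 ≤ m) (hme : Even m) (hn : 3 ≤ n) :
    ∃ z : ℤ, 1 < z ∧
      (z : ℝ) = ∏ h ∈ Finset.Icc 1 (n - 1), ∏ k ∈ Finset.Icc 1 (m / 2 - 1),
        (4 * Real.sin (h * Real.pi / n) ^ 2 + 4 * Real.sin (k * Real.pi / m) ^ 2) := by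
  obtain ⟨z, hle, hz⟩ := stmt_5_general m n (by omega) hme (by omega)
  exact ⟨z, (one_lt_pow₀ (by omega) (by omega)).trans_le hle, hz⟩
end

section
/- Let m ≥ 4 be even and n ≥ 3 with gcd(m,n) = 1. Then there exists a natural number N that is not prime such that (N : ℝ) = n · ∏_{h=1}^{n−1} ∏_{k=1}^{m/2−1} (4·sin²(hπ/n) + 4·sin²(kπ/m)). (This number is the determinant of THK(m,n), so for m even the Turk's Head Knot THK(m,n) has composite determinant.) -/
open Real Finset

/-!
Let `S_j` be the rescaled Chebyshev polynomial of the second kind: it is monic with integer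
coefficients and its roots are `2 cos (kπ / (j + 1))` for `1 ≤ k ≤ j`. Put `m = 2 (b + 1)` and
`n = a + 1`. Since `4 sin² (kπ / m) = 2 - 2 cos (kπ / (b + 1))` and
`4 sin² (hπ / n) = 4 - (2 cos (hπ / n))²`, the double product is the product of the values of
`S_b (6 - X²)` at the roots of `S_a`, that is, the resultant of these two integer polynomials.
Moreover each inner product is the value of `S_b` at a point `≥ 2`, hence is at least
`S_b 2 = b + 1`. So the determinant is `n` times an integer which is at least `(b + 1) ^ a`.
-/

section TurksHead

open Polynomial Chebyshev

theorem map_resultant_eq_prod_eval₂_roots {R A : Type*} [CommRing R] [CommRing A] [IsDomain A]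
    (φ : R →+* A) {f : R[X]} (hf : f.Monic) (hs : (f.map φ).Splits) (g : R[X]) :
    φ (resultant f g) = ((f.map φ).roots.map (g.eval₂ φ)).prod := by
  have : Nontrivial R := φ.domain_nontrivial
  have h := resultant_eq_prod_eval (f.map φ) (g.map φ) g.natDegree natDegree_map_le hs
  rw [hf.natDegree_map, resultant_map_map, (hf.map φ).leadingCoeff, one_pow, one_mul] at h
  simpa only [eval_map] using h

theorem natDegree_chebyshev_S_int (n : ℕ) : (S ℤ n).natDegree = n := by
  have h := congrArg natDegree (S_comp_two_mul_X ℤ n)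
  rwa [natDegree_comp, ← C_ofNat, natDegree_C_mul_X _ two_ne_zero, mul_one,
    natDegree_U_natCast] at h

theorem monic_chebyshev_S_int (n : ℕ) : (S ℤ n).Monic := by
  have h := congrArg leadingCoeff (S_comp_two_mul_X ℤ n)
  have hX : (2 * X : ℤ[X]) = C 2 * X := by rw [C_ofNat]
  rw [hX, leadingCoeff_comp (by simp), leadingCoeff_C_mul_X,
    natDegree_chebyshev_S_int, leadingCoeff_U_natCast] at h
  exact mul_right_cancel₀ (pow_ne_zero n two_ne_zero) (h.trans (one_mul _).symm)

theorem monic_chebyshev_S (R : Type*) [CommRing R] (n : ℕ) : (S R n).Monic :=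
  map_S (Int.castRingHom R) n ▸ (monic_chebyshev_S_int n).map _

theorem natDegree_chebyshev_S (R : Type*) [CommRing R] [Nontrivial R] (n : ℕ) :
    (S R n).natDegree = n := by
  rw [← map_S (Int.castRingHom R), (monic_chebyshev_S_int n).natDegree_map,
    natDegree_chebyshev_S_int]

theorem mul_pi_div_mem_Ioo {n k : ℕ} (hk : k ∈ Finset.Icc 1 n) :
    (k * π / (n + 1) : ℝ) ∈ Set.Ioo 0 π := by
  obtain ⟨hk_pos, hk_le⟩ := Finset.mem_Icc.mp hk
  have hk_lt : (k : ℝ) < n + 1 := by exact_mod_cast Nat.lt_succ_of_le hk_le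
  refine ⟨by positivity, ?_⟩
  rw [div_lt_iff₀ (by positivity), mul_comm]
  gcongr

theorem injOn_two_mul_cos_mul_pi_div (n : ℕ) :
    Set.InjOn (fun k : ℕ ↦ 2 * cos (k * π / (n + 1))) (Finset.Icc 1 n) := by
  intro j hj k hk hjk
  have hangle := injOn_cos (Set.Ioo_subset_Icc_self (mul_pi_div_mem_Ioo hj))
    (Set.Ioo_subset_Icc_self (mul_pi_div_mem_Ioo hk)) (mul_left_cancel₀ two_ne_zero hjk)
  field_simp at hangle
  exact_mod_cast hangle

theorem eval_chebyshev_S_two_mul_cos_mul_pi_div {n k : ℕ} (hk : k ∈ Finset.Icc 1 n) :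
    (S ℝ n).eval (2 * cos (k * π / (n + 1))) = 0 := by
  have hsin : sin (k * π / (n + 1) : ℝ) ≠ 0 :=
    (sin_pos_of_mem_Ioo (mul_pi_div_mem_Ioo hk)).ne'
  have h := S_two_mul_real_cos (k * π / (n + 1)) n
  rw [Int.cast_natCast, mul_div_cancel₀ _ (by positivity), sin_nat_mul_pi] at h
  exact (mul_eq_zero_iff_right hsin).mp h

theorem roots_chebyshev_S_real (n : ℕ) :
    (S ℝ n).roots = (Finset.Icc 1 n).val.map fun k : ℕ ↦ 2 * cos (k * π / (n + 1)) := by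
  rw [← Finset.image_val_of_injOn (injOn_two_mul_cos_mul_pi_div n)]
  refine roots_eq_of_natDegree_le_card_of_ne_zero ?_ ?_ (monic_chebyshev_S ℝ n).ne_zero
  · simp only [Finset.forall_mem_image]
    exact fun k hk ↦ eval_chebyshev_S_two_mul_cos_mul_pi_div hk
  · rw [Finset.card_image_of_injOn (injOn_two_mul_cos_mul_pi_div n), Nat.card_Icc,
      natDegree_chebyshev_S, Nat.add_sub_cancel]

theorem splits_chebyshev_S_real (n : ℕ) : (S ℝ n).Splits := by
  rw [splits_iff_card_roots, roots_chebyshev_S_real, natDegree_chebyshev_S]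
  simp

theorem eval_chebyshev_S_real (n : ℕ) (x : ℝ) :
    (S ℝ n).eval x = ∏ k ∈ Finset.Icc 1 n, (x - 2 * cos (k * π / (n + 1))) := by
  rw [(splits_chebyshev_S_real n).eval_eq_prod_roots_of_monic (monic_chebyshev_S ℝ n),
    roots_chebyshev_S_real, Multiset.map_map]
  rfl

theorem add_one_le_eval_chebyshev_S_real (n : ℕ) {x : ℝ} (hx : 2 ≤ x) :
    (n + 1 : ℝ) ≤ (S ℝ n).eval x := by
  calc (n + 1 : ℝ) = (S ℝ n).eval 2 := by rw [S_eval_two, Int.cast_natCast]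
    _ = ∏ k ∈ Finset.Icc 1 n, (2 - 2 * cos (k * π / (n + 1))) := eval_chebyshev_S_real n 2
    _ ≤ ∏ k ∈ Finset.Icc 1 n, (x - 2 * cos (k * π / (n + 1))) :=
      Finset.prod_le_prod (fun k _ ↦ by linarith [cos_le_one (k * π / (n + 1))])
        fun k _ ↦ by gcongr
    _ = (S ℝ n).eval x := (eval_chebyshev_S_real n x).symm

theorem prod_add_four_mul_sin_sq (n : ℕ) (t : ℝ) :
    ∏ k ∈ Finset.Icc 1 n, (t + 4 * sin (k * π / (2 * (n + 1))) ^ 2) = (S ℝ n).eval (t + 2) := by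
  rw [eval_chebyshev_S_real]
  refine Finset.prod_congr rfl fun k _ ↦ ?_
  have hangle : (k * π / (n + 1) : ℝ) = 2 * (k * π / (2 * (n + 1))) := by field_simp
  rw [hangle, sin_sq_eq_half_sub]
  ring

theorem prod_prod_four_mul_sin_sq_eq_resultant (a b : ℕ) :
    ∏ h ∈ Finset.Icc 1 a, ∏ k ∈ Finset.Icc 1 b,
      (4 * sin (h * π / (a + 1)) ^ 2 + 4 * sin (k * π / (2 * (b + 1))) ^ 2) =
      ((resultant (S ℤ a) ((S ℤ b).comp (6 - X ^ 2)) : ℤ) : ℝ) := by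
  have hres := map_resultant_eq_prod_eval₂_roots (Int.castRingHom ℝ) (monic_chebyshev_S ℤ a)
    (by rw [map_S]; exact splits_chebyshev_S_real a) ((S ℤ b).comp (6 - X ^ 2))
  rw [eq_intCast, map_S, roots_chebyshev_S_real, Multiset.map_map] at hres
  refine Eq.trans (Finset.prod_congr rfl fun h _ ↦ ?_) hres.symm
  have hsin : 4 * sin (h * π / (a + 1)) ^ 2 + 2 = 6 - (2 * cos (h * π / (a + 1))) ^ 2 := by
    rw [sin_sq]
    ring
  rw [prod_add_four_mul_sin_sq, hsin, Function.comp_apply, ← eval_map, Polynomial.map_comp, map_S,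
    eval_comp]
  simp

theorem add_one_pow_le_prod_prod_four_mul_sin_sq (a b : ℕ) :
    (b + 1 : ℝ) ^ a ≤ ∏ h ∈ Finset.Icc 1 a, ∏ k ∈ Finset.Icc 1 b,
      (4 * sin (h * π / (a + 1)) ^ 2 + 4 * sin (k * π / (2 * (b + 1))) ^ 2) := by
  calc (b + 1 : ℝ) ^ a = ∏ _h ∈ Finset.Icc 1 a, (b + 1 : ℝ) := by simp
    _ ≤ _ := Finset.prod_le_prod (fun _ _ ↦ by positivity) fun h _ ↦ by
      rw [prod_add_four_mul_sin_sq]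
      exact add_one_le_eval_chebyshev_S_real b (le_add_of_nonneg_left (by positivity))

theorem exists_natCast_eq_prod_prod_four_mul_sin_sq (a b : ℕ) :
    ∃ d : ℕ, (b + 1) ^ a ≤ d ∧ (d : ℝ) = ∏ h ∈ Finset.Icc 1 a, ∏ k ∈ Finset.Icc 1 b,
      (4 * sin (h * π / (a + 1)) ^ 2 + 4 * sin (k * π / (2 * (b + 1))) ^ 2) := by
  have hlower := add_one_pow_le_prod_prod_four_mul_sin_sq a b
  rw [prod_prod_four_mul_sin_sq_eq_resultant] at hlower ⊢
  have hint : (((b + 1) ^ a : ℕ) : ℤ) ≤ resultant (S ℤ a) ((S ℤ b).comp (6 - X ^ 2)) := by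
    exact_mod_cast hlower
  obtain ⟨d, hd⟩ := Int.eq_ofNat_of_zero_le ((Int.natCast_nonneg _).trans hint)
  rw [hd] at hint ⊢
  exact ⟨d, Int.ofNat_le.mp hint, (Int.cast_natCast d).symm⟩

end TurksHead

theorem stmt_6_general (m n : ℕ) (hm : 4 ≤ m) (hme : Even m) (hn : 2 ≤ n) :
    ∃ N : ℕ, ¬ Nat.Prime N ∧
      (N : ℝ) = n * ∏ h ∈ Finset.Icc 1 (n - 1), ∏ k ∈ Finset.Icc 1 (m / 2 - 1),
        (4 * Real.sin (h * Real.pi / n) ^ 2 + 4 * Real.sin (k * Real.pi / m) ^ 2) := by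
  obtain ⟨a, rfl⟩ : ∃ a, n = a + 1 := ⟨n - 1, by omega⟩
  obtain ⟨b, rfl⟩ : ∃ b, m = 2 * (b + 1) := by
    obtain ⟨r, rfl⟩ := hme
    exact ⟨r - 1, by omega⟩
  obtain ⟨d, hd_lower, hd⟩ := exists_natCast_eq_prod_prod_four_mul_sin_sq a b
  have hd_gt : 1 < d := (Nat.one_lt_pow (by omega) (by omega)).trans_le hd_lower
  refine ⟨(a + 1) * d, Nat.not_prime_mul (by omega) hd_gt.ne', ?_⟩
  rw [Nat.mul_div_cancel_left _ two_pos, Nat.add_sub_cancel, Nat.add_sub_cancel]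
  push_cast
  rw [hd]

/-- For m ≥ 4 even and n ≥ 3 with gcd(m,n) = 1, the determinant
n · ∏_{h=1}^{n−1} ∏_{k=1}^{m/2−1} (4 sin²(hπ/n) + 4 sin²(kπ/m))
of THK(m,n) is a natural number that is not prime. -/
theorem stmt_6 (m n : ℕ) (hm : 4 ≤ m) (hme : Even m) (hn : 3 ≤ n)
    (hgcd : Nat.gcd m n = 1) :
    ∃ N : ℕ, ¬ Nat.Prime N ∧
      (N : ℝ) = n * ∏ h ∈ Finset.Icc 1 (n - 1), ∏ k ∈ Finset.Icc 1 (m / 2 - 1),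
        (4 * Real.sin (h * Real.pi / n) ^ 2 + 4 * Real.sin (k * Real.pi / m) ^ 2) :=
  stmt_6_general m n hm hme (by omega)
end

section
/- For every m ≥ 2, every complex root z of the polynomial d_m is a positive real number; that is, if the evaluation of d_m (with coefficients coerced to ℂ) at z is 0, then z has imaginary part 0 and real part strictly greater than 0. -/
open Polynomial

/-- The polynomials d_m: d_2 = 1 − X, d_3 = 1 − 3X + X²,
d_{m+1} = (1 − X)·d_m − X·d_{m−1} for m ≥ 3. -/
noncomputable def dpoly : ℕ → Polynomial ℤ
  | 0 => 0
  | 1 => 0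
  | 2 => 1 - X
  | 3 => 1 - 3 * X + X ^ 2
  | (m + 4) => (1 - X) * dpoly (m + 3) - X * dpoly (m + 2)

/-! Write a root as `z = a * b` with `a + b = 1 - z`. Solving the recurrence gives
`(a - b) * d_m(z) = a ^ m - b ^ m`, so `‖a‖ = ‖b‖`. Since conjugation then sends `a` to
`‖a‖² / a` and `b` to `‖a‖² / b`, conjugating `a + b = 1 - a * b` yields a second equation for
`a * b`, and the two together force `z = a * b = ‖a‖²`. -/

theorem exists_add_eq_and_mul_eq {K : Type*} [Field K] [IsAlgClosed K] (s p : K) :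
    ∃ a b : K, a + b = s ∧ a * b = p := by
  have hdeg : (X ^ 2 - C s * X + C p).degree = 2 := by compute_degree!
  obtain ⟨a, ha⟩ := IsAlgClosed.exists_root (X ^ 2 - C s * X + C p) (by simp [hdeg])
  have hquad : a * a - s * a + p = 0 := by
    simpa [sq] using ha
  obtain ⟨b, -, hsum, hprod⟩ := vieta_formula_quadratic hquad
  exact ⟨a, b, hsum, hprod⟩

section Binet

variable {A : Type*} [CommRing A] {a b : A}

theorem sub_mul_aeval_dpoly (h : a + b = 1 - a * b) :
    ∀ n : ℕ, (a - b) * aeval (a * b) (dpoly (n + 2)) = a ^ (n + 2) - b ^ (n + 2)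
  | 0 => by
    simp only [dpoly, map_sub, map_one, aeval_X, ← h]
    ring
  | 1 => by
    have hd : 1 - 3 * (a * b) + (a * b) ^ 2 = (a + b) ^ 2 - a * b := by rw [h]; ring
    simp only [dpoly, map_sub, map_one, map_add, map_mul, map_pow, aeval_X, map_ofNat, hd]
    ring
  | n + 2 => by
    simp only [dpoly, map_sub, map_one, map_mul, aeval_X, ← h]
    linear_combination (a + b) * sub_mul_aeval_dpoly h (n + 1) - a * b * sub_mul_aeval_dpoly h n

theorem aeval_zero_dpoly (n : ℕ) : aeval (0 : A) (dpoly (n + 2)) = 1 := by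
  -- the pair `a = 1`, `b = 0` satisfies `a + b = 1 - a * b` and has product `0`
  simpa using sub_mul_aeval_dpoly (a := (1 : A)) (b := 0) (by simp) n

end Binet

section EqualNorms

open ComplexConjugate

variable {𝕜 : Type*} [RCLike 𝕜] {a b : 𝕜}

theorem conj_add_mul_mul_of_norm_eq (hab : ‖a‖ = ‖b‖) :
    conj (a + b) * (a * b) = (‖a‖ : 𝕜) ^ 2 * (a + b) := by
  have ha := RCLike.conj_mul a
  have hb := RCLike.conj_mul b
  rw [← hab] at hb
  rw [map_add]
  linear_combination b * ha + a * hb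

theorem mul_eq_norm_sq_of_norm_eq_of_add_eq_one_sub_mul (hab : ‖a‖ = ‖b‖)
    (h : a + b = 1 - a * b) : a * b = (‖a‖ : 𝕜) ^ 2 := by
  have hconj : (1 - conj (a * b)) * (a * b) = (‖a‖ : 𝕜) ^ 2 * (1 - a * b) := by
    simpa only [h, map_sub, map_one] using conj_add_mul_mul_of_norm_eq hab
  have hnorm : conj (a * b) * (a * b) = ((‖a‖ : 𝕜) ^ 2) ^ 2 := by
    rw [RCLike.conj_mul, norm_mul, ← hab, RCLike.ofReal_mul]
    ring
  have hne : 1 + (‖a‖ : 𝕜) ^ 2 ≠ 0 := by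
    exact_mod_cast (by positivity : 1 + ‖a‖ ^ 2 ≠ 0)
  apply mul_right_cancel₀ hne
  linear_combination hconj + hnorm

end EqualNorms

/-- For m ≥ 2, every complex root of d_m is a positive real number. -/
theorem stmt_7 (m : ℕ) (hm : 2 ≤ m) (z : ℂ) (hz : Polynomial.aeval z (dpoly m) = 0) :
    z.im = 0 ∧ 0 < z.re := by
  obtain ⟨n, rfl⟩ := Nat.exists_eq_add_of_le' hm
  obtain ⟨a, b, hsum, rfl⟩ := exists_add_eq_and_mul_eq (1 - z) z
  have hpow : a ^ (n + 2) = b ^ (n + 2) := by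
    rw [← sub_eq_zero, ← sub_mul_aeval_dpoly hsum, hz, mul_zero]
  have hnorm : ‖a‖ = ‖b‖ := by
    rw [← pow_left_inj₀ (norm_nonneg a) (norm_nonneg b) (n + 1).succ_ne_zero, ← norm_pow,
      ← norm_pow, hpow]
  have ha : a ≠ 0 := by
    rintro rfl
    rw [zero_mul, aeval_zero_dpoly] at hz
    exact one_ne_zero hz
  have hab_eq : a * b = ((‖a‖ ^ 2 : ℝ) : ℂ) := by
    exact_mod_cast mul_eq_norm_sq_of_norm_eq_of_add_eq_one_sub_mul hnorm hsum
  rw [hab_eq, Complex.ofReal_im, Complex.ofReal_re]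
  exact ⟨rfl, by positivity⟩
end

section
/- For every m ≥ 2, the polynomial d_m, viewed in ℝ[X], has natural degree m − 1 and has m − 1 distinct real roots; that is, the set of real roots of d_m has cardinality m − 1 (so all roots of d_m are real and simple). -/
open Polynomial

/-! The substitution `x = s ^ 2`, `1 - s ^ 2 = 2 * s * c` turns the recurrence of `d_m` into that of
the Chebyshev polynomials of the second kind: `d_m(s ^ 2) = s ^ (m - 1) * U_{m - 1}(c)`. Every real
`c` arises from `s = exp (-arsinh c)`, and `c ↦ s ^ 2` is injective, so the `m - 1` real roots of
`U_{m - 1}` yield `m - 1` real roots of `d_m`, as many as its degree allows. -/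

open Polynomial.Chebyshev

theorem natDegree_dpoly_add_two (n : ℕ) : (dpoly (n + 2)).natDegree = n + 1 := by
  induction n using Nat.twoStepInduction with
  | zero => rw [dpoly]; compute_degree!
  | one => rw [dpoly]; compute_degree!
  | more n ih₀ ih₁ =>
    have natDegree_one_sub_X : (1 - X : ℤ[X]).natDegree = 1 := by compute_degree!
    have ne_zero₀ : dpoly (n + 2) ≠ 0 := ne_zero_of_natDegree_gt (n := n) (by lia)
    have ne_zero₁ : dpoly (n + 3) ≠ 0 := ne_zero_of_natDegree_gt (n := n) (by lia)
    have natDegree_one_sub_X_mul : ((1 - X) * dpoly (n + 3)).natDegree = n + 3 := by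
      rw [natDegree_mul (ne_zero_of_natDegree_gt (n := 0) (by lia)) ne_zero₁, ih₁,
        natDegree_one_sub_X]
      lia
    have natDegree_X_mul_dpoly : (X * dpoly (n + 2)).natDegree = n + 2 := by
      rw [natDegree_X_mul ne_zero₀, ih₀]
    rw [dpoly, natDegree_sub_eq_left_of_natDegree_lt (by lia), natDegree_one_sub_X_mul]

theorem dpoly_add_two_ne_zero (n : ℕ) : dpoly (n + 2) ≠ 0 :=
  ne_zero_of_natDegree_gt (n := n) (by rw [natDegree_dpoly_add_two]; lia)

theorem aeval_sq_dpoly_add_two {R : Type*} [CommRing R] {s c : R} (h : 1 - s ^ 2 = 2 * s * c)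
    (n : ℕ) : aeval (s ^ 2) (dpoly (n + 2)) = s ^ (n + 1) * (U R (n + 1)).eval c := by
  induction n using Nat.twoStepInduction with
  | zero =>
    simp only [dpoly, map_sub, map_one, aeval_X, Nat.cast_zero, zero_add, U_one, eval_mul,
      eval_ofNat, eval_X]
    linear_combination h
  | one =>
    simp only [dpoly, map_sub, map_add, map_mul, map_pow, map_one, aeval_X, map_ofNat,
      Nat.cast_one, one_add_one_eq_two, U_two, eval_sub, eval_mul, eval_pow, eval_ofNat, eval_X,
      eval_one]
    linear_combination (1 - s ^ 2 + 2 * s * c) * h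
  | more n ih₀ ih₁ =>
    have U_recurrence : (U R ((n + 2 : ℕ) + 1)).eval c =
        2 * c * (U R ((n + 1 : ℕ) + 1)).eval c - (U R (n + 1)).eval c := by
      rw [show ((n + 2 : ℕ) + 1 : ℤ) = n + 1 + 2 by push_cast; ring, U_add_two, Nat.cast_succ]
      simp only [eval_sub, eval_mul, eval_ofNat, eval_X]
    rw [dpoly, U_recurrence]
    simp only [map_sub, map_mul, map_one, aeval_X]
    rw [ih₀, ih₁]
    linear_combination s ^ (n + 2) * (U R ((n + 1 : ℕ) + 1)).eval c * h

theorem one_sub_exp_neg_arsinh_sq (c : ℝ) :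
    1 - Real.exp (-Real.arsinh c) ^ 2 = 2 * Real.exp (-Real.arsinh c) * c := by
  have exp_mul_exp_neg : Real.exp (Real.arsinh c) * Real.exp (-Real.arsinh c) = 1 := by
    rw [← Real.exp_add, add_neg_cancel, Real.exp_zero]
  have sinh_arsinh_eq : (Real.exp (Real.arsinh c) - Real.exp (-Real.arsinh c)) / 2 = c := by
    rw [← Real.sinh_eq, Real.sinh_arsinh]
  linear_combination 2 * Real.exp (-Real.arsinh c) * sinh_arsinh_eq - exp_mul_exp_neg

theorem exp_neg_arsinh_sq_injective :
    Function.Injective fun c : ℝ => Real.exp (-Real.arsinh c) ^ 2 := by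
  intro a b hab
  have hexp : Real.exp (-Real.arsinh a) = Real.exp (-Real.arsinh b) :=
    (pow_left_inj₀ (Real.exp_nonneg _) (Real.exp_nonneg _) two_ne_zero).1 hab
  exact Real.arsinh_injective (neg_injective (Real.exp_injective hexp))

theorem ncard_rootSet_U_real (n : ℕ) : ((U ℝ n).rootSet ℝ).ncard = n := by
  classical
  rw [rootSet_def, Set.ncard_coe_finset, aroots, Algebra.algebraMap_self, Polynomial.map_id,
    roots_U_real, Finset.val_toFinset, Finset.card_image_of_injOn, Finset.card_range]
  exact (Finset.range n).nodup_map_iff_injOn.mp (roots_U_real_nodup n)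

theorem mapsTo_rootSet_U_rootSet_dpoly (n : ℕ) :
    Set.MapsTo (fun c : ℝ => Real.exp (-Real.arsinh c) ^ 2)
      ((U ℝ (n + 1)).rootSet ℝ) ((dpoly (n + 2)).rootSet ℝ) := by
  intro c hc
  have U_eval_eq_zero : (U ℝ (n + 1)).eval c = 0 := by
    simpa only [coe_aeval_eq_eval] using aeval_eq_zero_of_mem_rootSet hc
  rw [mem_rootSet_of_ne (dpoly_add_two_ne_zero n),
    aeval_sq_dpoly_add_two (one_sub_exp_neg_arsinh_sq c), U_eval_eq_zero, mul_zero]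

theorem ncard_rootSet_dpoly_add_two (n : ℕ) : ((dpoly (n + 2)).rootSet ℝ).ncard = n + 1 := by
  apply le_antisymm
  · exact (ncard_rootSet_le _ ℝ).trans_eq (natDegree_dpoly_add_two n)
  · calc
      n + 1 = ((U ℝ (n + 1)).rootSet ℝ).ncard := mod_cast (ncard_rootSet_U_real (n + 1)).symm
      _ ≤ ((dpoly (n + 2)).rootSet ℝ).ncard :=
        Set.ncard_le_ncard_of_injOn _ (mapsTo_rootSet_U_rootSet_dpoly n)
          exp_neg_arsinh_sq_injective.injOn (rootSet_finite _ ℝ)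

/-- For m ≥ 2, d_m viewed in ℝ[X] has degree m − 1 and m − 1 distinct real
roots (all roots of d_m are real and simple). -/
theorem stmt_8 (m : ℕ) (hm : 2 ≤ m) :
    ((dpoly m).map (Int.castRingHom ℝ)).natDegree = m - 1 ∧
      {x : ℝ | Polynomial.aeval x (dpoly m) = 0}.ncard = m - 1 := by
  obtain ⟨n, rfl⟩ := Nat.exists_eq_add_of_le' hm
  have setOf_aeval_eq_zero :
      {x : ℝ | aeval x (dpoly (n + 2)) = 0} = (dpoly (n + 2)).rootSet ℝ :=
    Set.ext fun _ => (mem_rootSet_of_ne (dpoly_add_two_ne_zero n)).symm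
  constructor
  · rw [natDegree_map_eq_of_injective (RingHom.injective_int _), natDegree_dpoly_add_two,
      Nat.add_succ_sub_one]
  · rw [setOf_aeval_eq_zero, ncard_rootSet_dpoly_add_two, Nat.add_succ_sub_one]
end

section
/- For every even m ≥ 2, the evaluation of the polynomial d_m at 1 equals 0, and 1 is a root of d_m of multiplicity exactly one (the root multiplicity of 1 in d_m is 1); hence 1 is a root of g_m = (1 − X)·d_m of multiplicity exactly two. -/
/-!
At `X = 1` the recurrence degenerates to `d_{m+2}(1) = -d_m(1)`, so `d_m(1)` is `0` for even `m` and
`±1` for odd `m`. The differentiated recurrence at `1` reads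
`d'_{m+2}(1) = -d_{m+1}(1) - d_m(1) - d'_m(1)`. For even `m` the middle term vanishes and the other
two have the same sign, so nothing cancels: `d'_{2k+2}(1) = (-1)^(k+1) (k+1)` is nonzero and `1` is
a simple root.
-/

open Polynomial

section RootMultiplicity

theorem rootMultiplicity_neg {R : Type*} [Ring R] (p : R[X]) (a : R) :
    (-p).rootMultiplicity a = p.rootMultiplicity a := by
  classical simp only [rootMultiplicity_eq_multiplicity, neg_eq_zero, multiplicity_neg]

theorem ne_zero_of_eval_derivative_ne_zero {R : Type*} [Semiring R] {p : R[X]} {a : R}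
    (h : (derivative p).eval a ≠ 0) : p ≠ 0 := by
  rintro rfl
  simp at h

variable {R : Type*} [CommRing R] {p : R[X]} {a : R}

theorem rootMultiplicity_C_sub_X_mul (hp : p ≠ 0) (a : R) :
    ((C a - X) * p).rootMultiplicity a = p.rootMultiplicity a + 1 := by
  have factor_neg : (C a - X) * p = -(p * (X - C a) ^ 1) := by ring
  rw [factor_neg, rootMultiplicity_neg, rootMultiplicity_mul_X_sub_C_pow hp]

theorem rootMultiplicity_eq_one_of_eval_derivative_ne_zero
    (hroot : p.IsRoot a) (hderiv : (derivative p).eval a ≠ 0) : p.rootMultiplicity a = 1 := by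
  have hp : p ≠ 0 := ne_zero_of_eval_derivative_ne_zero hderiv
  have pos : 0 < p.rootMultiplicity a := (rootMultiplicity_pos hp).mpr hroot
  have not_multiple : ¬ 1 < p.rootMultiplicity a := fun h =>
    hderiv ((one_lt_rootMultiplicity_iff_isRoot hp).mp h).2
  omega

end RootMultiplicity

theorem eval_one_dpoly_add_four (n : ℕ) :
    (dpoly (n + 4)).eval 1 = -(dpoly (n + 2)).eval 1 := by
  simp [dpoly]

theorem eval_one_derivative_dpoly_add_four (n : ℕ) :
    (derivative (dpoly (n + 4))).eval 1 =
      -(dpoly (n + 3)).eval 1 - (dpoly (n + 2)).eval 1 - (derivative (dpoly (n + 2))).eval 1 := by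
  rw [dpoly]
  simp only [derivative_sub, derivative_mul, derivative_one, derivative_X, zero_sub, neg_mul,
    one_mul, eval_sub, eval_add, eval_neg, eval_mul, eval_one, eval_X, sub_self, zero_mul, add_zero]
  ring

theorem eval_one_dpoly_even (k : ℕ) : (dpoly (2 * k + 2)).eval 1 = 0 := by
  induction k with
  | zero => simp [dpoly]
  | succ k ih => rw [mul_add_one, add_assoc, eval_one_dpoly_add_four, ih, neg_zero]

theorem eval_one_dpoly_odd (k : ℕ) : (dpoly (2 * k + 3)).eval 1 = (-1) ^ (k + 1) := by
  induction k with
  | zero => simp [dpoly]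
  | succ k ih =>
    calc (dpoly (2 * k + 1 + 4)).eval 1
        = -(dpoly (2 * k + 3)).eval 1 := eval_one_dpoly_add_four _
      _ = (-1) ^ (k + 1 + 1) := by rw [ih]; ring

theorem eval_one_derivative_dpoly_even (k : ℕ) :
    (derivative (dpoly (2 * k + 2))).eval 1 = (-1) ^ (k + 1) * (k + 1) := by
  induction k with
  | zero => simp [dpoly]
  | succ k ih =>
    calc (derivative (dpoly (2 * k + 4))).eval 1
        = -(dpoly (2 * k + 3)).eval 1 - (dpoly (2 * k + 2)).eval 1
            - (derivative (dpoly (2 * k + 2))).eval 1 := eval_one_derivative_dpoly_add_four _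
      _ = -(-1) ^ (k + 1) - 0 - (-1) ^ (k + 1) * (k + 1) := by
          rw [eval_one_dpoly_odd, eval_one_dpoly_even, ih]
      _ = (-1) ^ (k + 1 + 1) * (↑(k + 1) + 1) := by push_cast; ring

theorem eval_one_derivative_dpoly_even_ne_zero (k : ℕ) :
    (derivative (dpoly (2 * k + 2))).eval 1 ≠ 0 := by
  rw [eval_one_derivative_dpoly_even]
  exact mul_ne_zero (pow_ne_zero _ (neg_ne_zero.mpr one_ne_zero)) (Nat.cast_add_one_ne_zero k)

/-- For even m ≥ 2, d_m(1) = 0 and 1 is a root of d_m of multiplicity exactly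
one; hence 1 is a root of g_m = (1 − X)·d_m of multiplicity exactly two. -/
theorem stmt_10 (m : ℕ) (hm : 2 ≤ m) (hme : Even m) :
    (dpoly m).eval 1 = 0 ∧ (dpoly m).rootMultiplicity 1 = 1 ∧
      ((1 - X) * dpoly m).rootMultiplicity 1 = 2 := by
  obtain ⟨k, rfl⟩ : ∃ k, m = 2 * k + 2 := by
    obtain ⟨j, rfl⟩ := hme
    exact ⟨j - 1, by omega⟩
  have hderiv := eval_one_derivative_dpoly_even_ne_zero k
  have hsimple : (dpoly (2 * k + 2)).rootMultiplicity 1 = 1 :=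
    rootMultiplicity_eq_one_of_eval_derivative_ne_zero (eval_one_dpoly_even k) hderiv
  have hmul := rootMultiplicity_C_sub_X_mul (ne_zero_of_eval_derivative_ne_zero hderiv) 1
  rw [C_1, hsimple] at hmul
  exact ⟨eval_one_dpoly_even k, hsimple, hmul⟩
end

section
/- For every m ≥ 2 and every k with 0 ≤ k ≤ m − 1, the k-th coefficient of the polynomial d_m equals (−1)^k · D(m−1−k, k), where D denotes the Delannoy numbers; that is, d_m(X) = Σ_{k=0}^{m−1} (−1)^k · D(m−1−k, k) · X^k. -/
open Polynomial

/-- The Delannoy numbers: D(i,0) = 1, D(0,k) = 1,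
D(i+1,k+1) = D(i,k+1) + D(i+1,k) + D(i,k). -/
def delannoy : ℕ → ℕ → ℕ
  | _, 0 => 1
  | 0, _ => 1
  | i + 1, k + 1 => delannoy i (k + 1) + delannoy (i + 1) k + delannoy i k

/-!
The Delannoy numbers on the antidiagonal `i + k = n` are the coefficients of a form
`Sₙ(a, b) = ∑ D(i, k) aⁱ bᵏ`. Splitting off the two boundary terms and applying the Delannoy
recurrence to the others gives `Sₙ₊₂ = (a + b) Sₙ₊₁ + a b Sₙ`. At `a = 1`, `b = -X` this is the
recurrence of `d_m`, shifted by one, so `d_m = S_{m-1}(1, -X)`; its coefficients can be read off.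
-/

theorem delannoy_zero_right (i : ℕ) : delannoy i 0 = 1 := by
  cases i <;> rw [delannoy]

theorem delannoy_zero_left (k : ℕ) : delannoy 0 k = 1 := by
  cases k <;> simp only [delannoy]

theorem delannoy_succ_succ (i k : ℕ) :
    delannoy (i + 1) (k + 1) = delannoy i (k + 1) + delannoy (i + 1) k + delannoy i k := by
  rw [delannoy]

section DelannoyForm

open Finset

variable {R : Type*} [CommSemiring R]

/-- The homogeneous form `∑_{i + k = n} D(i, k) a ^ i b ^ k` whose coefficients are the Delannoy
numbers on the `n`-th antidiagonal, evaluated at `a` and `b`. The specialization `a = 1`, `b = -X`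
gives the polynomials `dpoly`. -/
def delannoyForm (n : ℕ) (a b : R) : R :=
  ∑ p ∈ antidiagonal n, (delannoy p.1 p.2 : R) * a ^ p.1 * b ^ p.2

theorem delannoyForm_zero (a b : R) : delannoyForm 0 a b = 1 := by
  simp [delannoyForm, delannoy_zero_right]

theorem delannoyForm_one (a b : R) : delannoyForm 1 a b = a + b := by
  simp [delannoyForm, Nat.sum_antidiagonal_succ, delannoy_zero_left, delannoy_zero_right, add_comm]

theorem left_mul_delannoyForm_succ (n : ℕ) (a b : R) :
    a * delannoyForm (n + 1) a b = a ^ (n + 2) +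
      ∑ p ∈ antidiagonal n, (delannoy p.1 (p.2 + 1) : R) * a ^ (p.1 + 1) * b ^ (p.2 + 1) := by
  simp only [delannoyForm, Nat.sum_antidiagonal_succ', delannoy_zero_right, mul_add, mul_sum]
  congr 1
  · ring
  · exact sum_congr rfl fun _ _ => by ring

theorem right_mul_delannoyForm_succ (n : ℕ) (a b : R) :
    b * delannoyForm (n + 1) a b = b ^ (n + 2) +
      ∑ p ∈ antidiagonal n, (delannoy (p.1 + 1) p.2 : R) * a ^ (p.1 + 1) * b ^ (p.2 + 1) := by
  simp only [delannoyForm, Nat.sum_antidiagonal_succ, delannoy_zero_left, mul_add, mul_sum]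
  congr 1
  · ring
  · exact sum_congr rfl fun _ _ => by ring

theorem mul_mul_delannoyForm (n : ℕ) (a b : R) :
    a * b * delannoyForm n a b =
      ∑ p ∈ antidiagonal n, (delannoy p.1 p.2 : R) * a ^ (p.1 + 1) * b ^ (p.2 + 1) := by
  rw [delannoyForm, mul_sum]
  exact sum_congr rfl fun _ _ => by ring

theorem delannoyForm_add_two_eq_pow_add_pow_add_sum (n : ℕ) (a b : R) :
    delannoyForm (n + 2) a b = a ^ (n + 2) + b ^ (n + 2) +
      ∑ p ∈ antidiagonal n,
        (delannoy (p.1 + 1) (p.2 + 1) : R) * a ^ (p.1 + 1) * b ^ (p.2 + 1) := by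
  simp only [delannoyForm, Nat.sum_antidiagonal_succ (n := n + 1),
    Nat.sum_antidiagonal_succ' (n := n), delannoy_zero_left, delannoy_zero_right]
  ring

theorem delannoyForm_add_two (n : ℕ) (a b : R) :
    delannoyForm (n + 2) a b =
      (a + b) * delannoyForm (n + 1) a b + a * b * delannoyForm n a b := by
  rw [delannoyForm_add_two_eq_pow_add_pow_add_sum, add_mul, left_mul_delannoyForm_succ,
    right_mul_delannoyForm_succ, mul_mul_delannoyForm]
  simp only [delannoy_succ_succ, Nat.cast_add, add_mul, sum_add_distrib]
  ring

theorem coeff_delannoyForm_C_C_mul_X (i k : ℕ) (a b : R) :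
    (delannoyForm (i + k) (C a) (C b * X)).coeff k = delannoy i k * a ^ i * b ^ k := by
  have term_eq (p : ℕ × ℕ) :
      (delannoy p.1 p.2 : R[X]) * C a ^ p.1 * (C b * X) ^ p.2 =
        C (delannoy p.1 p.2 * a ^ p.1 * b ^ p.2) * X ^ p.2 := by
    simp only [C_mul, C_pow, map_natCast]
    ring
  simp only [delannoyForm, term_eq, finsetSum_coeff, coeff_C_mul_X_pow]
  rw [sum_eq_single (i, k)]
  · simp
  · rintro ⟨j, l⟩ hjl hne
    rw [HasAntidiagonal.mem_antidiagonal] at hjl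
    exact if_neg fun hkl => hne (by grind)
  · simp

end DelannoyForm

theorem dpoly_add_two (n : ℕ) : dpoly (n + 2) = delannoyForm (n + 1) 1 (-X) := by
  induction n using Nat.twoStepInduction with
  | zero => rw [dpoly, delannoyForm_one, sub_eq_add_neg]
  | one =>
    rw [dpoly, delannoyForm_add_two, delannoyForm_one, delannoyForm_zero]
    ring
  | more n ih₀ ih₁ =>
    rw [dpoly, ih₀, ih₁, delannoyForm_add_two (n + 1)]
    ring

/-- For m ≥ 2 and 0 ≤ k ≤ m − 1, the k-th coefficient of d_m is
(−1)^k · D(m−1−k, k). -/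
theorem stmt_11 (m : ℕ) (hm : 2 ≤ m) (k : ℕ) (hk : k ≤ m - 1) :
    (dpoly m).coeff k = (-1) ^ k * (delannoy (m - 1 - k) k : ℤ) := by
  have hdpoly : dpoly m = delannoyForm (m - 1 - k + k) (C 1) (C (-1) * X) := by
    obtain ⟨n, rfl⟩ := Nat.exists_eq_add_of_le' hm
    rw [Nat.sub_add_cancel hk, dpoly_add_two]
    simp only [map_one, map_neg, neg_one_mul, Nat.reduceSubDiff]
  rw [hdpoly, coeff_delannoyForm_C_C_mul_X, one_pow, mul_one, mul_comm]
end

section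
/- For every m ≥ 2, the polynomial d_m is palindromic up to sign: for every k with 0 ≤ k ≤ m − 1, the k-th coefficient of d_m equals (−1)^(m−1) times the (m−1−k)-th coefficient of d_m. -/
open Polynomial

/-!
Reversal of coefficients `p ↦ X ^ n * p(1 / X)` is additive for fixed `n`, and multiplicative when
the formal degrees `n` add up. It fixes `X` in formal degree `2` and negates `1 - X` in formal
degree `1`, so both terms of the recurrence for `d_m` are scaled by the same sign `(-1) ^ (m - 1)`.
-/

/-- `p` is self-reciprocal of formal degree `n` with multiplier `c`: `X ^ n * p(1 / X) = c * p(X)`.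
Palindromic and antipalindromic polynomials are the cases `c = 1` and `c = -1`. The formal degree
may exceed the degree of `p`, as it does for `X`, which is palindromic of formal degree `2`. -/
structure IsSelfReciprocal {R : Type*} [Semiring R] (n : ℕ) (c : R) (p : R[X]) : Prop where
  natDegree_le : p.natDegree ≤ n
  reflect_eq : p.reflect n = C c * p

namespace IsSelfReciprocal

theorem coeff_eq {R : Type*} [Semiring R] {n : ℕ} {c : R} {p : R[X]}
    (hp : IsSelfReciprocal n c p) {k : ℕ} (hk : k ≤ n) :
    p.coeff k = c * p.coeff (n - k) := by
  rw [← coeff_C_mul, ← hp.reflect_eq, coeff_reflect, ← revAt_le hk, revAt_invol]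

protected theorem mul {R : Type*} [CommSemiring R] {m n : ℕ} {c d : R} {p q : R[X]}
    (hp : IsSelfReciprocal m c p) (hq : IsSelfReciprocal n d q) :
    IsSelfReciprocal (m + n) (c * d) (p * q) where
  natDegree_le := natDegree_mul_le_of_le hp.natDegree_le hq.natDegree_le
  reflect_eq := by
    rw [reflect_mul p q hp.natDegree_le hq.natDegree_le, hp.reflect_eq, hq.reflect_eq, C_mul,
      mul_mul_mul_comm]

section Ring

variable {R : Type*} [Ring R]

protected theorem sub {n : ℕ} {c : R} {p q : R[X]} (hp : IsSelfReciprocal n c p)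
    (hq : IsSelfReciprocal n c q) : IsSelfReciprocal n c (p - q) where
  natDegree_le := (natDegree_sub_le p q).trans (max_le hp.natDegree_le hq.natDegree_le)
  reflect_eq := by rw [reflect_sub, hp.reflect_eq, hq.reflect_eq, mul_sub]

theorem one_sub_X : IsSelfReciprocal 1 (-1 : R) (1 - X) where
  natDegree_le := natDegree_sub_le_of_le (natDegree_one.trans_le zero_le_one) natDegree_X_le
  reflect_eq := by simp [reflect_sub, reflect_one]

end Ring

protected theorem X {R : Type*} [Semiring R] : IsSelfReciprocal 2 (1 : R) X where
  natDegree_le := natDegree_X_le.trans one_le_two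
  reflect_eq := by simpa using reflect_monomial (R := R) 2 1

end IsSelfReciprocal

theorem isSelfReciprocal_dpoly :
    ∀ m : ℕ, IsSelfReciprocal (m + 1) ((-1) ^ (m + 1)) (dpoly (m + 2))
  | 0 => by simpa [dpoly] using IsSelfReciprocal.one_sub_X
  | 1 => by
    have dpoly_three : dpoly 3 = (1 - X) * (1 - X) - X := by rw [dpoly]; ring
    have h := IsSelfReciprocal.one_sub_X (R := ℤ)
    simpa [dpoly_three] using (h.mul h).sub IsSelfReciprocal.X
  | m + 2 => by
    have hleft : IsSelfReciprocal (m + 3) ((-1) ^ (m + 3)) ((1 - X) * dpoly (m + 3)) := by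
      rw [pow_succ, mul_comm (1 - X)]
      exact (isSelfReciprocal_dpoly (m + 1)).mul .one_sub_X
    have hright : IsSelfReciprocal (m + 3) ((-1) ^ (m + 3)) (X * dpoly (m + 2)) := by
      rw [show ((-1) ^ (m + 3) : ℤ) = (-1) ^ (m + 1) * 1 by ring, mul_comm X]
      exact (isSelfReciprocal_dpoly m).mul .X
    rw [dpoly]
    exact hleft.sub hright

/-- For m ≥ 2, d_m is palindromic up to sign: for 0 ≤ k ≤ m − 1, the k-th
coefficient of d_m equals (−1)^(m−1) times the (m−1−k)-th coefficient. -/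
theorem stmt_12 (m : ℕ) (hm : 2 ≤ m) (k : ℕ) (hk : k ≤ m - 1) :
    (dpoly m).coeff k = (-1) ^ (m - 1) * (dpoly m).coeff (m - 1 - k) := by
  obtain ⟨n, rfl⟩ := Nat.exists_eq_add_of_le' hm
  exact (isSelfReciprocal_dpoly n).coeff_eq hk
end

section
/- For every m ≥ 2 and every nonzero real number α, if α is a root of d_m (the evaluation of d_m at α is 0), then α⁻¹ is also a root of d_m. -/
open Polynomial

/-!
Reversing coefficients with respect to degree `1` sends `1 - X` to `-(1 - X)`, and with respect to
degree `2` it fixes `X`. Hence the recurrence carries the symmetry `X ^ n * d (X⁻¹) = (-1) ^ n * d`,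
where `d = dpoly (n + 1)`, from two consecutive polynomials to the next. At a unit `u` it turns
`d u = 0` into `d u⁻¹ = 0`.
-/

theorem aeval_inv_eq_zero_of_reflect_dvd {R A : Type*} [CommSemiring R] [CommSemiring A]
    [Algebra R A] {p : R[X]} {N : ℕ} (hdeg : p.natDegree ≤ N) (hdvd : reflect N p ∣ p)
    (u : Aˣ) (hu : aeval (u : A) p = 0) : aeval (↑u⁻¹ : A) p = 0 := by
  have h_reflect : aeval (↑u⁻¹ : A) (reflect N p) = 0 := by
    let := u.invertible
    rw [← invOf_units u]
    exact (eval₂_reflect_eq_zero_iff (algebraMap R A) (u : A) N p hdeg).2 hu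
  exact zero_dvd_iff.1 (h_reflect ▸ map_dvd (aeval (↑u⁻¹ : A)) hdvd)

theorem reflect_two_X {R : Type*} [Semiring R] : reflect 2 (X : R[X]) = X := by
  simpa [revAt_le] using reflect_monomial (R := R) 2 1

section Recurrence

variable {R : Type*} [Ring R] {p q : R[X]} {n : ℕ}

theorem natDegree_one_sub_X_le : (1 - X : R[X]).natDegree ≤ 1 := by
  compute_degree

theorem natDegree_one_sub_X_mul_sub_X_mul_le (hp : p.natDegree ≤ n + 1) (hq : q.natDegree ≤ n) :
    ((1 - X) * p - X * q).natDegree ≤ n + 2 := by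
  refine (natDegree_sub_le _ _).trans (max_le ?_ ?_)
  · exact (natDegree_mul_le_of_le natDegree_one_sub_X_le hp).trans_eq (by lia)
  · exact (natDegree_mul_le_of_le natDegree_X_le hq).trans (by lia)

theorem reflect_one_one_sub_X : reflect 1 (1 - X : R[X]) = -(1 - X) := by
  rw [reflect_sub, reflect_one, reflect_one_X, pow_one, neg_sub]

theorem reflect_one_sub_X_mul_sub_X_mul (hp : p.natDegree ≤ n + 1) (hq : q.natDegree ≤ n) :
    reflect (n + 2) ((1 - X) * p - X * q) =
      -(1 - X) * reflect (n + 1) p - X * reflect n q := by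
  have h_left : reflect (n + 2) ((1 - X) * p) = -(1 - X) * reflect (n + 1) p := by
    rw [show n + 2 = 1 + (n + 1) by lia, reflect_mul _ _ natDegree_one_sub_X_le hp,
      reflect_one_one_sub_X]
  have h_right : reflect (n + 2) (X * q) = X * reflect n q := by
    rw [add_comm n 2, reflect_mul _ _ (natDegree_X_le.trans one_le_two) hq, reflect_two_X]
  rw [reflect_sub, h_left, h_right]

end Recurrence

-- The recurrence extends to `m = 2` with term `1` at index `1`, not the junk value `dpoly 1 = 0`.
theorem dpoly_three_eq : dpoly 3 = (1 - X) * (1 - X) - X * 1 := by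
  rw [dpoly]
  ring

theorem natDegree_dpoly_le (n : ℕ) : (dpoly (n + 2)).natDegree ≤ n + 1 := by
  induction n using Nat.twoStepInduction with
  | zero => exact natDegree_one_sub_X_le
  | one =>
    rw [dpoly_three_eq]
    exact natDegree_one_sub_X_mul_sub_X_mul_le natDegree_one_sub_X_le natDegree_one.le
  | more n ih₀ ih₁ => exact natDegree_one_sub_X_mul_sub_X_mul_le ih₁ ih₀

theorem reflect_dpoly (n : ℕ) :
    reflect (n + 1) (dpoly (n + 2)) = (-1) ^ (n + 1) * dpoly (n + 2) := by
  induction n using Nat.twoStepInduction with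
  | zero => rw [dpoly, reflect_one_one_sub_X, pow_one, neg_one_mul]
  | one =>
    rw [dpoly_three_eq,
      reflect_one_sub_X_mul_sub_X_mul natDegree_one_sub_X_le natDegree_one.le,
      reflect_one_one_sub_X, reflect_one]
    ring
  | more n ih₀ ih₁ =>
    rw [dpoly, reflect_one_sub_X_mul_sub_X_mul (natDegree_dpoly_le (n + 1)) (natDegree_dpoly_le n),
      ih₀, ih₁]
    ring

theorem reflect_dpoly_dvd (n : ℕ) : reflect (n + 1) (dpoly (n + 2)) ∣ dpoly (n + 2) := by
  rw [reflect_dpoly]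
  exact (isUnit_neg_one.pow _).mul_left_dvd.2 dvd_rfl

theorem stmt_13_general {A : Type*} [CommRing A] {m : ℕ} (hm : 2 ≤ m) (u : Aˣ)
    (hroot : aeval (u : A) (dpoly m) = 0) : aeval (↑u⁻¹ : A) (dpoly m) = 0 := by
  obtain ⟨n, rfl⟩ := Nat.exists_eq_add_of_le' hm
  exact aeval_inv_eq_zero_of_reflect_dvd (natDegree_dpoly_le n) (reflect_dpoly_dvd n) u hroot

/-- For m ≥ 2 and α ≠ 0 a real root of d_m, α⁻¹ is also a root of d_m. -/
theorem stmt_13 (m : ℕ) (hm : 2 ≤ m) (α : ℝ) (hα : α ≠ 0)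
    (hroot : Polynomial.aeval α (dpoly m) = 0) :
    Polynomial.aeval α⁻¹ (dpoly m) = 0 := by
  exact stmt_13_general hm (Units.mk0 α hα) hroot
end

section
/- Let m ≥ 3 be odd, set r = (m−1)/2, and let α : Fin r → ℝ satisfy α i > 0 for every i, with d_m, viewed in ℝ[X], equal to ∏_{i} (X − α i)·(X − (α i)⁻¹). Then for every n ≥ 3 there exists a natural number N with 1 < N and N not prime such that (N : ℝ) = ∏_{i} ((α i)^n + (α i)^(−n) − 2). (That is, the number G_{m,n} = [∏_i ((α i)^{n/2} − (α i)^{−n/2})]² is a composite natural number.) -/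
open Polynomial

/-!
Put `t i = α i + (α i)⁻¹ ≥ 2`. For `m = 2r + 1` the self-reciprocal polynomial `d_m` satisfies
`d_m(x) = x ^ r * P(x + x⁻¹)` with `P = W_r(X - 4) ∈ ℤ[X]`, where `W_r = S_r + S_{r-1}` is a
Chebyshev polynomial of the fourth kind; the roots of `P` are the `t i`. Hence `∏ g(t i)` is an
integer for every `g ∈ ℤ[X]`, and `∏ (t i - 2) = (-1) ^ r * W_r(-2) = 1`.

On the other hand `α ^ n + α⁻¹ ^ n = C_n(t)`, and `C_n - 2` is `(X - 2) W_k ^ 2` for `n = 2k + 1`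
and `(X - 2) (X + 2) S_{k-1} ^ 2` for `n = 2k`. Taking the product over `i`, the unit factors
`t i - 2` disappear and the square of an integer greater than `1` remains as a factor.
-/

section Chebyshev

section CommRing

variable (R : Type*) [CommRing R]

/-- The Chebyshev polynomial `W_k` of the fourth kind, rescaled so that
`W_k(2 cos θ) = sin ((k + 1/2) θ) / sin (θ / 2)`, in line with `Polynomial.Chebyshev.S`. -/
noncomputable def chebyshevW (k : ℤ) : R[X] :=
  Chebyshev.S R k + Chebyshev.S R (k - 1)

lemma chebyshevW_add_two (k : ℤ) :
    chebyshevW R (k + 2) = X * chebyshevW R (k + 1) - chebyshevW R k := by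
  have hS := Chebyshev.S_add_one R (k + 1)
  have hS' := Chebyshev.S_add_one R k
  simp only [chebyshevW]
  linear_combination (norm := ring_nf) hS + hS'

variable {R} in
lemma aeval_chebyshevW {A : Type*} [CommRing A] [Algebra R A] (x : A) (k : ℤ) :
    aeval x (chebyshevW R k) = (chebyshevW A k).eval x := by
  simp only [chebyshevW, map_add, Chebyshev.aeval_S, eval_add]

lemma chebyshevW_eval_neg_two (k : ℤ) : (chebyshevW R k).eval (-2) = k.negOnePow := by
  simp only [chebyshevW, eval_add, Chebyshev.S_eval_neg_two, Int.negOnePow_sub,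
    Int.negOnePow_one]
  push_cast
  ring

lemma chebyshevC_two_mul_sub_two (k : ℤ) :
    Chebyshev.C R (2 * k) - 2 = (X - 2) * (X + 2) * Chebyshev.S R (k - 1) ^ 2 := by
  have hC : Chebyshev.C R k ^ 2 = Chebyshev.C R (2 * k) + 2 := by
    rw [sq, Chebyshev.C_mul_C, sub_self, Chebyshev.C_zero, two_mul]
  have hCS := Chebyshev.C_eq_S_sub_X_mul_S R k
  have hS := Chebyshev.S_sq_add_S_sq R (k - 1)
  rw [sub_add_cancel] at hS
  rw [hCS] at hC
  linear_combination 4 * hS - hC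

lemma chebyshevC_two_mul_add_one_sub_two (k : ℤ) :
    Chebyshev.C R (2 * k + 1) - 2 = (X - 2) * chebyshevW R k ^ 2 := by
  have hC : Chebyshev.C R (k + 1) * Chebyshev.C R k = Chebyshev.C R (2 * k + 1) + X := by
    rw [Chebyshev.C_mul_C, add_sub_cancel_left, Chebyshev.C_one]
    ring_nf
  have hCS := Chebyshev.C_eq_S_sub_X_mul_S R k
  have hCS' := Chebyshev.C_eq_S_sub_X_mul_S R (k + 1)
  have hS := Chebyshev.S_sq_add_S_sq R (k - 1)
  have hS' := Chebyshev.S_add_one R k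
  rw [sub_add_cancel] at hS
  rw [add_sub_cancel_right, hS'] at hCS'
  rw [hCS, hCS'] at hC
  rw [chebyshevW]
  linear_combination (X + 2) * hS - hC

variable {R} in
lemma chebyshevC_eval_add {x y : R} (hxy : x * y = 1) (n : ℕ) :
    (Chebyshev.C R n).eval (x + y) = x ^ n + y ^ n := by
  rw [← dickson_one_one_eq_chebyshev_C, dickson_one_one_eval_add_inv x y hxy]

end CommRing

section Ordered

variable {A : Type*} [CommRing A] [LinearOrder A] [IsStrictOrderedRing A]

lemma add_one_le_chebyshevS_eval {t : A} (ht : 2 ≤ t) (k : ℕ) :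
    (k + 1 : A) ≤ (Chebyshev.S A k).eval t := by
  suffices h : (k + 1 : A) ≤ (Chebyshev.S A k).eval t ∧
      (Chebyshev.S A (k - 1)).eval t + 1 ≤ (Chebyshev.S A k).eval t from h.1
  induction k with
  | zero => simp
  | succ k ih =>
    obtain ⟨hk, hstep⟩ := ih
    push_cast
    rw [add_sub_cancel_right, Chebyshev.S_add_one, eval_sub, eval_mul, eval_X]
    have htwo_mul : 2 * (Chebyshev.S A k).eval t ≤ t * (Chebyshev.S A k).eval t :=
      mul_le_mul_of_nonneg_right ht (by linarith [k.cast_nonneg (α := A)])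
    constructor <;> linarith

lemma one_lt_chebyshevW_eval {t : A} (ht : 2 ≤ t) {k : ℕ} (hk : 1 ≤ k) :
    1 < (chebyshevW A k).eval t := by
  obtain ⟨j, rfl⟩ := Nat.exists_eq_add_of_le' hk
  have hj := add_one_le_chebyshevS_eval ht j
  have hj' := add_one_le_chebyshevS_eval ht (j + 1)
  rw [chebyshevW, eval_add]
  push_cast at hj' ⊢
  rw [add_sub_cancel_right]
  linarith [j.cast_nonneg (α := A)]

variable (A) in
lemma exists_chebyshevC_sub_two_eq_mul_sq {n : ℕ} (hn : 3 ≤ n) :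
    ∃ h g : ℤ[X], Chebyshev.C ℤ n - 2 = (X - 2) * h * g ^ 2 ∧
      ∀ t : A, 2 ≤ t → 0 < aeval t h ∧ 1 < aeval t g := by
  obtain ⟨k, rfl | rfl⟩ := n.even_or_odd'
  · obtain ⟨j, rfl⟩ : ∃ j, k = j + 2 := Nat.exists_eq_add_of_le' (by omega)
    refine ⟨X + 2, Chebyshev.S ℤ (j + 1 : ℕ), ?_, fun t ht ↦ ⟨?_, ?_⟩⟩
    · convert! chebyshevC_two_mul_sub_two ℤ (j + 2) using 4
      push_cast
      ring
    · simp only [map_add, aeval_X, map_ofNat]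
      linarith
    · have hS := add_one_le_chebyshevS_eval ht (j + 1)
      rw [Chebyshev.aeval_S]
      push_cast at hS ⊢
      linarith [j.cast_nonneg (α := A)]
  · refine ⟨1, chebyshevW ℤ k, ?_, fun t ht ↦ ⟨by simp, ?_⟩⟩
    · rw [mul_one]
      exact_mod_cast chebyshevC_two_mul_add_one_sub_two ℤ k
    · rw [aeval_chebyshevW]
      exact one_lt_chebyshevW_eval ht (by omega)

end Ordered

end Chebyshev

section Product

variable {ι : Type*} [Fintype ι]

lemma prod_aeval_mem_range_algebraMap {R A : Type*} [CommRing R] [CommRing A]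
    [Algebra R A] {f : R[X]} {t : ι → A}
    (hf : f.map (algebraMap R A) = ∏ i, (X - C (t i))) (g : R[X]) :
    ∏ i, aeval (t i) g ∈ (algebraMap R A).range := by
  nontriviality A
  have hlead : (∏ i, (X - C (t i)).leadingCoeff) ≠ 0 := by simp
  have hres := resultant_prod_left Finset.univ (fun i ↦ X - C (t i)) (g.map (algebraMap R A))
    g.natDegree hlead natDegree_map_le
  simp only [natDegree_X_sub_C, resultant_X_sub_C_left _ _ _ natDegree_map_le,
    eval_map_algebraMap] at hres
  refine ⟨resultant f g (∏ i, (X - C (t i))).natDegree g.natDegree, ?_⟩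
  rw [← resultant_map_map, hf, hres]

lemma prod_sub_two_eq_one {A : Type*} [CommRing A] {P : A[X]} {t : ι → A}
    (hP : P = ∏ i, (X - C (t i))) (hP_two : P.eval 2 = (-1) ^ Fintype.card ι) :
    ∏ i, (t i - 2) = 1 := by
  calc ∏ i, (t i - 2) = (-1) ^ Fintype.card ι * P.eval 2 := by
        simp [hP, eval_prod, ← Finset.card_univ, ← Finset.prod_neg]
    _ = 1 := by rw [hP_two, ← mul_pow, neg_one_mul, neg_neg, one_pow]

lemma exists_not_prime_natCast_eq_mul_sq {a b : ℤ} (ha : 0 < a) (hb : 1 < b) :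
    ∃ N : ℕ, 1 < N ∧ ¬ N.Prime ∧ (N : ℤ) = a * b ^ 2 := by
  lift a to ℕ using ha.le
  lift b to ℕ using by omega
  norm_cast at ha hb
  have hab : 1 < a * b := one_lt_mul_of_le_of_lt ha hb
  exact ⟨a * b * b, one_lt_mul hab.le hb, Nat.not_prime_mul hab.ne' hb.ne', by push_cast; ring⟩

theorem exists_not_prime_natCast_eq_prod_chebyshevC_sub_two {A : Type*} [CommRing A]
    [LinearOrder A] [IsStrictOrderedRing A] [Nonempty ι] {f : ℤ[X]} {t : ι → A}
    (hf : f.map (algebraMap ℤ A) = ∏ i, (X - C (t i))) (ht : ∀ i, 2 ≤ t i)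
    (hunit : ∏ i, (t i - 2) = 1) {n : ℕ} (hn : 3 ≤ n) :
    ∃ N : ℕ, 1 < N ∧ ¬ N.Prime ∧ (N : A) = ∏ i, ((Chebyshev.C A n).eval (t i) - 2) := by
  obtain ⟨h, g, hC, hbound⟩ := exists_chebyshevC_sub_two_eq_mul_sq A hn
  obtain ⟨a, ha⟩ := prod_aeval_mem_range_algebraMap hf h
  obtain ⟨b, hb⟩ := prod_aeval_mem_range_algebraMap hf g
  rw [eq_intCast] at ha hb
  have ha_pos : 0 < a := by
    rw [← Int.cast_pos (R := A), ha]
    exact Finset.prod_pos fun i _ ↦ (hbound _ (ht i)).1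
  have hb_one : 1 < b := by
    rw [← Int.cast_lt (R := A), Int.cast_one, hb]
    simpa only [Finset.prod_const_one] using
      Finset.prod_lt_prod_of_nonempty (fun _ _ ↦ one_pos) (fun i _ ↦ (hbound _ (ht i)).2)
        Finset.univ_nonempty
  obtain ⟨N, hN_one, hN_prime, hN⟩ := exists_not_prime_natCast_eq_mul_sq ha_pos hb_one
  refine ⟨N, hN_one, hN_prime, ?_⟩
  have hN_cast : (N : A) = a * b ^ 2 := by exact_mod_cast congrArg (Int.cast : ℤ → A) hN
  have hC_eval (x : A) :
      (Chebyshev.C A n).eval x - 2 = (x - 2) * aeval x h * aeval x g ^ 2 := by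
    simpa [map_ofNat] using congrArg (aeval x) hC
  simp only [hN_cast, ha, hb, hC_eval, Finset.prod_mul_distrib, Finset.prod_pow, hunit, one_mul]

end Product

section AddInv

variable {K : Type*} [Field K]

lemma infinite_image_add_inv [Infinite K] : ((fun x : K ↦ x + x⁻¹) '' {0}ᶜ).Infinite := by
  intro hfin
  refine (Set.finite_singleton (0 : K)).infinite_compl (hfin.of_finite_fibers _ ?_)
  rintro _ ⟨a, ha, rfl⟩
  refine (Set.toFinite {a, a⁻¹}).subset fun x ⟨hx, hxa⟩ ↦ ?_
  simp only [Set.mem_compl_iff, Set.mem_singleton_iff] at ha hx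
  simp only [Set.mem_preimage, Set.mem_singleton_iff] at hxa
  have hprod : (x - a) * (x - a⁻¹) = 0 := by
    field_simp at hxa ⊢
    linear_combination hxa
  simpa [sub_eq_zero] using hprod

lemma eq_prod_X_sub_C_add_inv [Infinite K] {ι : Type*} [Fintype ι] {P Q : K[X]} {α : ι → K}
    (hα : ∀ i, α i ≠ 0)
    (hPQ : ∀ x ≠ 0, P.eval x = x ^ Fintype.card ι * Q.eval (x + x⁻¹))
    (hP : P = ∏ i, (X - C (α i)) * (X - C (α i)⁻¹)) :
    Q = ∏ i, (X - C (α i + (α i)⁻¹)) := by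
  refine eq_of_infinite_eval_eq _ _ (infinite_image_add_inv.mono ?_)
  rintro _ ⟨x, hx : x ≠ 0, rfl⟩
  have hfactor (i : ι) :
      (x - α i) * (x - (α i)⁻¹) = x * (x + x⁻¹ - (α i + (α i)⁻¹)) := by
    have := hα i
    field_simp
    ring
  apply mul_left_cancel₀ (pow_ne_zero (Fintype.card ι) hx)
  rw [← hPQ x hx, hP]
  simp only [eval_prod, eval_mul, eval_sub, eval_X, eval_C, hfactor]
  rw [Finset.prod_mul_distrib, Finset.prod_const, Finset.card_univ]

lemma two_le_add_inv [LinearOrder K] [IsStrictOrderedRing K] {x : K} (hx : 0 < x) :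
    2 ≤ x + x⁻¹ := by
  have hsq : x + x⁻¹ - 2 = (x - 1) ^ 2 * x⁻¹ := by
    field_simp
    ring
  rw [← sub_nonneg, hsq]
  positivity

end AddInv

section Dpoly

lemma dpoly_add_four (m : ℕ) : dpoly (m + 4) = (1 - X) * dpoly (m + 3) - X * dpoly (m + 2) := by
  rw [dpoly]

lemma dpoly_add_six (m : ℕ) :
    dpoly (m + 6) = (1 - 4 * X + X ^ 2) * dpoly (m + 4) - X ^ 2 * dpoly (m + 2) := by
  rw [dpoly_add_four (m + 2), dpoly_add_four (m + 1)]
  linear_combination X * dpoly_add_four m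

/-- The integer polynomial `P` with `d_{2r+1}(x) = x ^ r * P(x + x⁻¹)` for `r ≥ 1`. -/
noncomputable def dpolyTrace (r : ℕ) : ℤ[X] :=
  (chebyshevW ℤ r).comp (X - 4)

lemma dpolyTrace_zero : dpolyTrace 0 = 1 := by
  simp [dpolyTrace, chebyshevW]

lemma dpolyTrace_one : dpolyTrace 1 = X - 3 := by
  simp only [dpolyTrace, chebyshevW, Nat.cast_one, Chebyshev.S_one, sub_self, Chebyshev.S_zero,
    add_comp, X_comp, one_comp]
  ring

lemma dpolyTrace_add_two (r : ℕ) :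
    dpolyTrace (r + 2) = (X - 4) * dpolyTrace (r + 1) - dpolyTrace r := by
  simp [dpolyTrace, chebyshevW_add_two]

lemma aeval_two_dpolyTrace (A : Type*) [CommRing A] (r : ℕ) :
    aeval (2 : A) (dpolyTrace r) = (-1) ^ r := by
  have hshift : aeval (2 : A) (X - 4 : ℤ[X]) = -2 := by
    rw [map_sub, aeval_X, map_ofNat]
    norm_num
  rw [dpolyTrace, aeval_comp, hshift, aeval_chebyshevW, chebyshevW_eval_neg_two]
  simp

lemma aeval_dpoly {A : Type*} [CommRing A] {x y : A} (hxy : x * y = 1) (r : ℕ) :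
    aeval x (dpoly (2 * r + 3)) = x ^ (r + 1) * aeval (x + y) (dpolyTrace (r + 1)) := by
  induction r using Nat.twoStepInduction with
  | zero =>
    simp only [dpoly, map_add, map_sub, map_one, map_mul, map_ofNat, aeval_X, map_pow, zero_add,
      pow_one, dpolyTrace_one]
    linear_combination -hxy
  | one =>
    simp only [dpoly, map_sub, map_mul, map_one, aeval_X, map_add, map_ofNat, map_pow,
      Nat.reduceAdd, dpolyTrace_add_two, zero_add, dpolyTrace_one, dpolyTrace_zero]
    linear_combination (7 * x - 2 * x ^ 2 - x * y - 1) * hxy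
  | more r ih ih' =>
    have hd : dpoly (2 * (r + 2) + 3) = _ := dpoly_add_six (2 * r + 1)
    have hd' := congrArg (aeval x) hd
    have hP := congrArg (aeval (x + y)) (dpolyTrace_add_two (r + 1))
    simp only [map_add, map_sub, map_mul, map_pow, map_one, map_ofNat, aeval_X] at hd' hP
    rw [hd', hP]
    linear_combination (1 - 4 * x + x ^ 2) * ih' - x ^ 2 * ih -
      x ^ (r + 2) * aeval (x + y) (dpolyTrace (r + 2)) * hxy

lemma map_dpolyTrace_eq_prod {K ι : Type*} [Field K] [Infinite K] [Fintype ι] {r : ℕ}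
    (hr : Fintype.card ι = r + 1) {α : ι → K} (hα : ∀ i, α i ≠ 0)
    (hd : (dpoly (2 * r + 3)).map (algebraMap ℤ K) =
      ∏ i, (X - C (α i)) * (X - C (α i)⁻¹)) :
    (dpolyTrace (r + 1)).map (algebraMap ℤ K) = ∏ i, (X - C (α i + (α i)⁻¹)) := by
  refine eq_prod_X_sub_C_add_inv hα (fun x hx ↦ ?_) hd
  rw [eval_map_algebraMap, eval_map_algebraMap, hr, aeval_dpoly (mul_inv_cancel₀ hx)]

end Dpoly

theorem stmt_14_general {K : Type*} [Field K] [LinearOrder K] [IsStrictOrderedRing K]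
    (m : ℕ) (hm : 3 ≤ m) (hmo : Odd m)
    (α : Fin ((m - 1) / 2) → K) (hpos : ∀ i, 0 < α i)
    (hd : (dpoly m).map (Int.castRingHom K) =
      ∏ i, (X - C (α i)) * (X - C (α i)⁻¹))
    (n : ℕ) (hn : 3 ≤ n) :
    ∃ N : ℕ, 1 < N ∧ ¬ Nat.Prime N ∧
      (N : K) = ∏ i, ((α i) ^ (n : ℤ) + (α i) ^ (-(n : ℤ)) - 2) := by
  obtain ⟨r, rfl⟩ : ∃ r, m = 2 * r + 3 := by
    obtain ⟨k, rfl⟩ := hmo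
    exact ⟨k - 1, by omega⟩
  have hcard : Fintype.card (Fin ((2 * r + 3 - 1) / 2)) = r + 1 := by simp
  have : Nonempty (Fin ((2 * r + 3 - 1) / 2)) := Fintype.card_pos_iff.mp (by omega)
  have hP := map_dpolyTrace_eq_prod hcard (fun i ↦ (hpos i).ne') hd
  have hunit : ∏ i, (α i + (α i)⁻¹ - 2) = 1 :=
    prod_sub_two_eq_one hP (by rw [eval_map_algebraMap, aeval_two_dpolyTrace, hcard])
  obtain ⟨N, hN_one, hN_prime, hN⟩ := exists_not_prime_natCast_eq_prod_chebyshevC_sub_two hP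
    (fun i ↦ two_le_add_inv (hpos i)) hunit hn
  refine ⟨N, hN_one, hN_prime, hN.trans (Finset.prod_congr rfl fun i _ ↦ ?_)⟩
  rw [chebyshevC_eval_add (mul_inv_cancel₀ (hpos i).ne'), zpow_neg, zpow_natCast, inv_pow]

/-- Let m ≥ 3 be odd, with the roots of d_m given by the positive real pairs
α i, (α i)⁻¹ for i in Fin ((m−1)/2).  Then for every n ≥ 3, the number
G_{m,n} = ∏_i ((α i)^n + (α i)^(−n) − 2) is a composite natural number. -/
theorem stmt_14 (m : ℕ) (hm : 3 ≤ m) (hmo : Odd m)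
    (α : Fin ((m - 1) / 2) → ℝ) (hpos : ∀ i, 0 < α i)
    (hd : (dpoly m).map (Int.castRingHom ℝ) =
      ∏ i, (X - C (α i)) * (X - C (α i)⁻¹))
    (n : ℕ) (hn : 3 ≤ n) :
    ∃ N : ℕ, 1 < N ∧ ¬ Nat.Prime N ∧
      (N : ℝ) = ∏ i, ((α i) ^ (n : ℤ) + (α i) ^ (-(n : ℤ)) - 2) :=
  stmt_14_general m hm hmo α hpos hd n hn
end

section
/- Let m ≥ 3 be odd, set r = (m−1)/2, and let α : Fin r → ℝ satisfy α i > 0 for every i, with d_m, viewed in ℝ[X], equal to ∏_{i} (X − α i)·(X − (α i)⁻¹). Then for every even n ≥ 4 there exists an integer k > 1 such that ∏_{i} ((α i)^n + (α i)^(−n) − 2) = (∏_{i} ((α i)² + (α i)^(−2) − 2)) · (k : ℝ)²; that is, for n even the number G_{m,n} equals G_{m,2} times the square of an integer greater than one. -/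
open Polynomial

/-!
Put `n = 2 q` and `t i = α i + (α i)⁻¹`. The Chebyshev polynomial `S (q - 1)` satisfies
`(x - x⁻¹) * S (q - 1) (x + x⁻¹) = x ^ q - x⁻¹ ^ q`, whose square says that the `i`-th factor of
`G_{m,n}` is that of `G_{m,2}` times `S (q - 1) (t i) ^ 2`. So `k = ± ∏ i, S (q - 1) (t i)`.

Since `∏ i, (X - α i) * (X - (α i)⁻¹) = ∏ i, (X ^ 2 - t i * X + 1)` is integral, so is
`∏ i, (X - t i)`: its coefficients can be read off one at a time, dividing by `X` in between. Hence
`k` is an integer, being a resultant of integer polynomials. Finally `|t i| ≥ 2`, which forces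
`|S (q - 1) (t i)| ≥ q ≥ 2`.
-/

theorem mem_lifts_of_X_mul_mem_lifts {R S : Type*} [Semiring R] [Semiring S] {f : R →+* S}
    {p : S[X]} (h : X * p ∈ lifts f) : p ∈ lifts f := by
  rw [lifts_iff_coeff_lifts] at h ⊢
  exact fun n ↦ coeff_X_mul p n ▸ h (n + 1)

section CommSemiring

variable {S : Type*} [CommSemiring S]

/-- The polynomial `X ^ n * p (X + X⁻¹)`, which is self-reciprocal of degree `2 * n` when `p` has
degree `n`. It is encoded as the value at `(X ^ 2 + 1, X)` of the degree-`n` homogenization of `p`;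
coefficients of `p` beyond degree `n` are therefore ignored. -/
noncomputable def reciprocalTransform (n : ℕ) (p : S[X]) : S[X] :=
  MvPolynomial.aeval ![X ^ 2 + 1, X] (p.homogenize n)

theorem reciprocalTransform_eq_sum (n : ℕ) (p : S[X]) :
    reciprocalTransform n p =
      ∑ kl ∈ Finset.HasAntidiagonal.antidiagonal n,
        C (p.coeff kl.1) * ((X ^ 2 + 1) ^ kl.1 * X ^ kl.2) := by
  simp [reciprocalTransform, homogenize, MvPolynomial.aeval_monomial, Finsupp.prod_fintype]

theorem reciprocalTransform_zero (p : S[X]) : reciprocalTransform 0 p = C (p.coeff 0) := by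
  simp [reciprocalTransform_eq_sum]

theorem reciprocalTransform_succ (n : ℕ) (p : S[X]) :
    reciprocalTransform (n + 1) p =
      C (p.coeff (n + 1)) * (X ^ 2 + 1) ^ (n + 1) + X * reciprocalTransform n p := by
  simp only [reciprocalTransform_eq_sum, Finset.Nat.sum_antidiagonal_succ', Finset.mul_sum,
    pow_zero, mul_one]
  congr 1
  exact Finset.sum_congr rfl fun kl _ ↦ by ring

end CommSemiring

section CommRing

variable {R S : Type*} [CommRing R] [CommRing S]

theorem reciprocalTransform_prod_X_sub_C {ι : Type*} (s : Finset ι) (t : ι → S) :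
    reciprocalTransform s.card (∏ i ∈ s, (X - C (t i))) =
      ∏ i ∈ s, (X ^ 2 + 1 - C (t i) * X) := by
  have h := homogenize_finsetProd (n := fun _ ↦ 1) fun i (_ : i ∈ s) ↦ natDegree_X_sub_C_le (t i)
  rw [Finset.sum_const, smul_eq_mul, mul_one] at h
  simp [reciprocalTransform, h]

theorem coeff_mem_range_of_reciprocalTransform_mem_lifts {f : R →+* S} {n : ℕ} {p : S[X]}
    (h : reciprocalTransform n p ∈ lifts f) {j : ℕ} (hj : j ≤ n) : p.coeff j ∈ Set.range f := by
  induction n generalizing j with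
  | zero =>
    obtain rfl := Nat.le_zero.mp hj
    simpa [reciprocalTransform_zero] using (lifts_iff_coeff_lifts _).mp h 0
  | succ n ih =>
    have hlead : p.coeff (n + 1) ∈ Set.range f := by
      simpa [reciprocalTransform_succ, coeff_zero_eq_eval_zero]
        using (lifts_iff_coeff_lifts _).mp h 0
    obtain rfl | hj := hj.eq_or_lt
    · exact hlead
    have hX : X ^ 2 + 1 ∈ lifts f := add_mem (X_pow_mem_lifts f 2) (one_mem _)
    have hmul := mul_mem (C'_mem_lifts hlead) (pow_mem hX (n + 1))
    refine ih (mem_lifts_of_X_mul_mem_lifts ?_) (Nat.le_of_lt_succ hj)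
    rw [lifts_iff_liftsRing] at h hmul ⊢
    simpa [reciprocalTransform_succ] using sub_mem h hmul

theorem mem_lifts_of_reciprocalTransform_mem_lifts {f : R →+* S} {n : ℕ} {p : S[X]}
    (hp : p.natDegree ≤ n) (h : reciprocalTransform n p ∈ lifts f) : p ∈ lifts f := by
  rw [lifts_iff_coeff_lifts]
  intro j
  obtain hj | hj := le_or_gt j n
  · exact coeff_mem_range_of_reciprocalTransform_mem_lifts h hj
  · exact ⟨0, by rw [map_zero, coeff_eq_zero_of_natDegree_lt (hp.trans_lt hj)]⟩

theorem prod_X_sub_C_add_mem_lifts {f : R →+* S} {ι : Type*} {s : Finset ι} {a b : ι → S}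
    (hab : ∀ i ∈ s, a i * b i = 1) (h : ∏ i ∈ s, (X - C (a i)) * (X - C (b i)) ∈ lifts f) :
    ∏ i ∈ s, (X - C (a i + b i)) ∈ lifts f := by
  have hfactor : ∀ i ∈ s,
      (X - C (a i)) * (X - C (b i)) = X ^ 2 + 1 - C (a i + b i) * X := fun i hi ↦ by
    have hC : C (a i) * C (b i) = 1 := by rw [← C_mul, hab i hi, C_1]
    rw [C_add]
    linear_combination hC
  rw [Finset.prod_congr rfl hfactor, ← reciprocalTransform_prod_X_sub_C] at h
  refine mem_lifts_of_reciprocalTransform_mem_lifts ?_ h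
  nontriviality S
  exact (natDegree_finsetProd_X_sub_C_eq_card s _).le

end CommRing

theorem prod_eval_mem_range {R S : Type*} [CommRing R] [CommRing S] {f : R →+* S} {ι : Type*}
    {s : Finset ι} {t : ι → S} (h : ∏ i ∈ s, (X - C (t i)) ∈ lifts f) (q : R[X]) :
    ∏ i ∈ s, (q.map f).eval (t i) ∈ Set.range f := by
  nontriviality S
  obtain ⟨p, hp⟩ := (mem_lifts _).mp h
  refine ⟨resultant p q (p.map f).natDegree q.natDegree, ?_⟩
  rw [← resultant_map_map, hp, resultant_prod_left _ _ _ _ (by simp) natDegree_map_le]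
  simp [natDegree_map_le]

theorem sub_mul_eval_add_chebyshevS {R : Type*} [CommRing R] {x y : R} (h : x * y = 1) (n : ℕ) :
    (x - y) * (Chebyshev.S R n).eval (x + y) = x ^ (n + 1) - y ^ (n + 1) := by
  induction n using Nat.twoStepInduction with
  | zero => simp
  | one =>
    rw [Nat.cast_one, Chebyshev.S_one, eval_X]
    ring
  | more n ih₀ ih₁ =>
    push_cast at ih₁ ⊢
    simp only [Chebyshev.S_add_two, eval_sub, eval_mul, eval_X]
    linear_combination (x + y) * ih₁ - ih₀ + (x ^ (n + 1) - y ^ (n + 1)) * h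

theorem zpow_add_zpow_neg_sub_two_eq_mul_chebyshevS_sq {K : Type*} [Field K] {x : K} (hx : x ≠ 0)
    (n : ℕ) :
    x ^ (2 * (n + 1) : ℤ) + x ^ (-(2 * (n + 1)) : ℤ) - 2 =
      (x ^ (2 : ℤ) + x ^ (-2 : ℤ) - 2) * (Chebyshev.S K n).eval (x + x⁻¹) ^ 2 := by
  have hmul : x * x⁻¹ = 1 := mul_inv_cancel₀ hx
  have hsq (k : ℕ) : x ^ (2 * k : ℤ) + x ^ (-(2 * k) : ℤ) - 2 = (x ^ k - x⁻¹ ^ k) ^ 2 := by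
    have hk : x ^ k * x⁻¹ ^ k = 1 := by rw [← mul_pow, hmul, one_pow]
    rw [← mul_neg, zpow_mul', zpow_mul', zpow_neg, ← inv_zpow]
    simp only [zpow_natCast, zpow_ofNat]
    linear_combination 2 * hk
  have h₁ := hsq 1
  have hn := hsq (n + 1)
  push_cast at h₁ hn
  rw [pow_one, pow_one] at h₁
  rw [hn, h₁, ← sub_mul_eval_add_chebyshevS hmul, mul_pow]

theorem add_one_le_norm_eval_chebyshevS {K : Type*} [NormedField K] {t : K} (ht : 2 ≤ ‖t‖)
    (n : ℕ) : (n : ℝ) + 1 ≤ ‖(Chebyshev.S K n).eval t‖ := by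
  suffices h : (n : ℝ) + 1 ≤ ‖(Chebyshev.S K n).eval t‖ ∧
      ‖(Chebyshev.S K n).eval t‖ + 1 ≤ ‖(Chebyshev.S K (n + 1)).eval t‖ from h.1
  induction n with
  | zero => simpa [one_add_one_eq_two] using ht
  | succ n ih =>
    obtain ⟨hn, hstep⟩ := ih
    push_cast
    refine ⟨by linarith, ?_⟩
    rw [add_assoc, one_add_one_eq_two, Chebyshev.S_add_two, eval_sub, eval_mul, eval_X]
    have hsub := norm_sub_norm_le (t * (Chebyshev.S K (n + 1)).eval t) ((Chebyshev.S K n).eval t)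
    rw [norm_mul] at hsub
    have hmul := mul_le_mul_of_nonneg_right ht (norm_nonneg ((Chebyshev.S K (n + 1)).eval t))
    linarith

theorem two_le_abs_add_inv {K : Type*} [Field K] [LinearOrder K] [IsStrictOrderedRing K] {x : K}
    (hx : x ≠ 0) : 2 ≤ |x + x⁻¹| := by
  have hmul : x * x⁻¹ = 1 := mul_inv_cancel₀ hx
  rw [← abs_two (α := K), ← sq_le_sq]
  linear_combination sq_nonneg (x - x⁻¹) - 4 * hmul

theorem stmt_16_general {ι : Type*} [Fintype ι] [Nonempty ι] {P : ℤ[X]} {α : ι → ℝ}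
    (hα : ∀ i, α i ≠ 0)
    (hP : P.map (Int.castRingHom ℝ) = ∏ i, (X - C (α i)) * (X - C (α i)⁻¹))
    {n : ℕ} (hn : 4 ≤ n) (hne : Even n) :
    ∃ k : ℤ, 1 < k ∧
      ∏ i, ((α i) ^ (n : ℤ) + (α i) ^ (-(n : ℤ)) - 2) =
        (∏ i, ((α i) ^ (2 : ℤ) + (α i) ^ (-(2 : ℤ)) - 2)) * (k : ℝ) ^ 2 := by
  obtain ⟨q, rfl⟩ : ∃ q : ℕ, n = 2 * (q + 1) := by
    obtain ⟨q, rfl⟩ := hne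
    exact ⟨q - 1, by omega⟩
  have hT : ∏ i, (X - C (α i + (α i)⁻¹)) ∈ lifts (Int.castRingHom ℝ) :=
    prod_X_sub_C_add_mem_lifts (fun i _ ↦ mul_inv_cancel₀ (hα i)) ((mem_lifts _).mpr ⟨P, hP⟩)
  obtain ⟨k, hk⟩ := prod_eval_mem_range hT (Chebyshev.S ℤ q)
  simp only [Chebyshev.map_S, eq_intCast] at hk
  refine ⟨|k|, ?_, ?_⟩
  · have hfactor (i : ι) : 1 < |(Chebyshev.S ℝ q).eval (α i + (α i)⁻¹)| := by
      have hq : (1 : ℝ) ≤ q := by exact_mod_cast (by omega : 1 ≤ q)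
      have hle := add_one_le_norm_eval_chebyshevS (K := ℝ) (two_le_abs_add_inv (hα i)) q
      rw [Real.norm_eq_abs] at hle
      linarith
    have hk_gt : (1 : ℝ) < |(k : ℝ)| := by
      rw [hk, Finset.abs_prod]
      simpa using Finset.prod_lt_prod_of_nonempty (fun _ _ ↦ one_pos) (fun i _ ↦ hfactor i)
        Finset.univ_nonempty
    exact_mod_cast hk_gt
  · rw [Int.cast_abs, sq_abs, hk, ← Finset.prod_pow, ← Finset.prod_mul_distrib]
    push_cast
    exact Finset.prod_congr rfl fun i _ ↦
      zpow_add_zpow_neg_sub_two_eq_mul_chebyshevS_sq (hα i) q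

/-- Let m ≥ 3 be odd, with the roots of d_m given by the positive real pairs
α i, (α i)⁻¹ for i in Fin ((m−1)/2).  Then for every even n ≥ 4, the number
G_{m,n} = ∏_i ((α i)^n + (α i)^(−n) − 2) equals G_{m,2} times the square of
an integer greater than one. -/
theorem stmt_16 (m : ℕ) (hm : 3 ≤ m) (hmo : Odd m)
    (α : Fin ((m - 1) / 2) → ℝ) (hpos : ∀ i, 0 < α i)
    (hd : (dpoly m).map (Int.castRingHom ℝ) =
      ∏ i, (X - C (α i)) * (X - C (α i)⁻¹))
    (n : ℕ) (hn : 4 ≤ n) (hne : Even n) :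
    ∃ k : ℤ, 1 < k ∧
      ∏ i, ((α i) ^ (n : ℤ) + (α i) ^ (-(n : ℤ)) - 2) =
        (∏ i, ((α i) ^ (2 : ℤ) + (α i) ^ (-(2 : ℤ)) - 2)) * (k : ℝ) ^ 2 := by
  have : Nonempty (Fin ((m - 1) / 2)) := ⟨⟨0, by omega⟩⟩
  exact stmt_16_general (fun i ↦ (hpos i).ne') hd hn hne
end

section
/- The roots of the polynomial X² − 3X + 1 (which is d_3) are φ² and φ^(−2), where φ is the golden ratio, and for every n ≥ 1, (φ²)^n + (φ²)^(−n) − 2 = L(2n) − 2; that is, G_{3,n} equals the determinant L(2n) − 2 of THK(3,n). -/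
/-!
Two numbers `a`, `b` with sum `1` and product `-1` satisfy `x ^ 2 = x + 1`, so `a ^ n + b ^ n`
obeys the Lucas recursion and has the Lucas initial values. At even indices `b ^ 2 = (a ^ 2)⁻¹`
turns this sum into `(a ^ 2) ^ n + (a ^ 2) ^ (-n)`; its value `3` at `n = 1` makes `a ^ 2` and
`(a ^ 2)⁻¹` the two roots of `X ^ 2 - 3 * X + 1` by Vieta.
-/

theorem sq_sub_add_mul_add_mul_eq_zero_iff {R : Type*} [CommRing R] [NoZeroDivisors R]
    {a b x : R} : x ^ 2 - (a + b) * x + a * b = 0 ↔ x = a ∨ x = b := by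
  have factorization : x ^ 2 - (a + b) * x + a * b = (x - a) * (x - b) := by ring
  rw [factorization, mul_eq_zero, sub_eq_zero, sub_eq_zero]

theorem lucas_eq_pow_add_pow {R : Type*} [CommRing R] {a b : R} (hadd : a + b = 1)
    (hmul : a * b = -1) (n : ℕ) : (lucas n : R) = a ^ n + b ^ n := by
  have ha : a ^ 2 = a + 1 := by linear_combination a * hadd - hmul
  have hb : b ^ 2 = b + 1 := by linear_combination b * hadd - hmul
  induction n using Nat.twoStepInduction with
  | zero => norm_num [lucas]
  | one => simp [lucas, hadd]
  | more n ih ih_succ =>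
    calc (lucas (n + 2) : R) = (a ^ (n + 1) + b ^ (n + 1)) + (a ^ n + b ^ n) := by
          rw [lucas, Nat.cast_add, ih_succ, ih]
      _ = a ^ n * (a + 1) + b ^ n * (b + 1) := by ring
      _ = a ^ (n + 2) + b ^ (n + 2) := by rw [← ha, ← hb, ← pow_add, ← pow_add]

section Field

variable {K : Type*} [Field K] {a : K}

theorem lucas_two_mul_eq_zpow_add_zpow_neg (ha : a ^ 2 = a + 1) (n : ℕ) :
    (lucas (2 * n) : K) = (a ^ 2) ^ (n : ℤ) + (a ^ 2) ^ (-(n : ℤ)) := by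
  have hmul : a * (1 - a) = -1 := by linear_combination -ha
  have hinv : (a ^ 2)⁻¹ = (1 - a) ^ 2 :=
    inv_eq_of_mul_eq_one_right (by rw [← mul_pow, hmul, neg_one_sq])
  rw [lucas_eq_pow_add_pow (add_sub_cancel a 1) hmul, pow_mul, pow_mul, ← hinv, inv_pow,
    zpow_neg, zpow_natCast]

theorem sq_add_inv_sq_eq_three (ha : a ^ 2 = a + 1) : a ^ 2 + (a ^ 2)⁻¹ = 3 := by
  simpa [lucas] using (lucas_two_mul_eq_zpow_add_zpow_neg ha 1).symm

theorem sq_sub_three_mul_add_one_eq_zero_iff (ha : a ^ 2 = a + 1) {x : K} :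
    x ^ 2 - 3 * x + 1 = 0 ↔ x = a ^ 2 ∨ x = (a ^ 2)⁻¹ := by
  have a_ne_zero : a ≠ 0 := by
    rintro rfl
    simp at ha
  rw [← sq_sub_add_mul_add_mul_eq_zero_iff, sq_add_inv_sq_eq_three ha,
    mul_inv_cancel₀ (pow_ne_zero 2 a_ne_zero)]

theorem stmt_17_general (ha : a ^ 2 = a + 1) :
    (∀ x : K, x ^ 2 - 3 * x + 1 = 0 ↔ x = a ^ 2 ∨ x = (a ^ 2)⁻¹) ∧
      ∀ n : ℕ, (a ^ 2) ^ (n : ℤ) + (a ^ 2) ^ (-(n : ℤ)) - 2 = (lucas (2 * n) : K) - 2 :=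
  ⟨fun _ ↦ sq_sub_three_mul_add_one_eq_zero_iff ha,
    fun n ↦ by rw [lucas_two_mul_eq_zpow_add_zpow_neg ha]⟩

end Field

/-- The roots of X² − 3X + 1 (which is d_3) are φ² and φ^(−2), where
φ = (1 + √5)/2 is the golden ratio, and for every n ≥ 1,
(φ²)^n + (φ²)^(−n) − 2 = L(2n) − 2, i.e. G_{3,n} is the determinant of
THK(3,n). -/
theorem stmt_17 (φ : ℝ) (hφ : φ = (1 + Real.sqrt 5) / 2) :
    (∀ x : ℝ, x ^ 2 - 3 * x + 1 = 0 ↔ x = φ ^ 2 ∨ x = (φ ^ 2)⁻¹) ∧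
      ∀ n : ℕ, 1 ≤ n →
        (φ ^ 2) ^ (n : ℤ) + (φ ^ 2) ^ (-(n : ℤ)) - 2 = (lucas (2 * n) : ℝ) - 2 := by
  have hsq : φ ^ 2 = φ + 1 := hφ ▸ Real.goldenRatio_sq
  exact (stmt_17_general hsq).imp_right fun h n _ ↦ h n
end

section
/- For every integer m ≥ 2, if the Pell number P(m) is prime, then m is prime. -/
/-!
For a Lucas sequence `U`, given by `U 0 = 0`, `U 1 = 1` and `U (n + 2) = p * U (n + 1) + q * U n`,
the addition formula `U (m + n + 1) = U (m + 1) * U (n + 1) + q * U m * U n` gives `U a ∣ U b`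
whenever `a ∣ b`. If `1 < p` and `0 ≤ q`, then `U` is moreover strictly increasing, so every divisor
`a` of `m` other than `1` and `m` yields a divisor `U a` of `U m` other than `1` and `U m`.
The Pell numbers are the case `p = 2`, `q = 1`.
-/

/-- The Lucas sequence of the first kind with `U 0 = 0`, `U 1 = 1`. The sign of `q` is opposite to
the customary one, so that the recurrence makes sense in a semiring. -/
def lucasU {R : Type*} [Semiring R] (p q : R) : ℕ → R
  | 0 => 0
  | 1 => 1
  | n + 2 => p * lucasU p q (n + 1) + q * lucasU p q n

section Semiring

variable {R : Type*} [Semiring R] (p q : R)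

@[simp]
theorem lucasU_zero : lucasU p q 0 = 0 := rfl

@[simp]
theorem lucasU_one : lucasU p q 1 = 1 := rfl

theorem lucasU_add_two (n : ℕ) :
    lucasU p q (n + 2) = p * lucasU p q (n + 1) + q * lucasU p q n := rfl

end Semiring

section CommSemiring

variable {R : Type*} [CommSemiring R] (p q : R)

theorem lucasU_add_add_one (m n : ℕ) :
    lucasU p q (m + n + 1) =
      lucasU p q (m + 1) * lucasU p q (n + 1) + q * lucasU p q m * lucasU p q n := by
  induction n using Nat.twoStepInduction with
  | zero => simp
  | one => simp [lucasU_add_two, mul_comm]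
  | more n ih₀ ih₁ =>
    calc lucasU p q (m + n + 1 + 2)
        = p * lucasU p q (m + (n + 1) + 1) + q * lucasU p q (m + n + 1) := lucasU_add_two ..
      _ = lucasU p q (m + 1) * (p * lucasU p q (n + 2) + q * lucasU p q (n + 1)) +
            q * lucasU p q m * (p * lucasU p q (n + 1) + q * lucasU p q n) := by
          rw [ih₀, ih₁]; ring

theorem isDvdSequence_lucasU : IsDvdSequence (lucasU p q) := by
  rintro a _ ⟨k, rfl⟩
  induction k with
  | zero => simp
  | succ k ih =>
    cases a with
    | zero => simp
    | succ b =>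
      rw [Nat.mul_succ, ← add_assoc, lucasU_add_add_one]
      exact dvd_add (dvd_mul_left _ _) ((ih.mul_left q).mul_right _)

end CommSemiring

section Ordered

variable {R : Type*} [Semiring R] [PartialOrder R] [IsStrictOrderedRing R] {p q : R}

theorem lucasU_nonneg (hp : 0 ≤ p) (hq : 0 ≤ q) (n : ℕ) : 0 ≤ lucasU p q n := by
  induction n using Nat.twoStepInduction with
  | zero => simp
  | one => simp
  | more n ih₀ ih₁ => rw [lucasU_add_two]; positivity

theorem lucasU_succ_pos (hp : 0 < p) (hq : 0 ≤ q) (n : ℕ) : 0 < lucasU p q (n + 1) := by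
  induction n with
  | zero => simp
  | succ n ih =>
    rw [lucasU_add_two]
    exact add_pos_of_pos_of_nonneg (mul_pos hp ih) (mul_nonneg hq (lucasU_nonneg hp.le hq n))

theorem lucasU_strictMono (hp : 1 < p) (hq : 0 ≤ q) : StrictMono (lucasU p q) := by
  have hp₀ : 0 < p := one_pos.trans hp
  refine strictMono_nat_of_lt_succ fun n ↦ ?_
  cases n with
  | zero => simp
  | succ n =>
    calc lucasU p q (n + 1)
        < p * lucasU p q (n + 1) := lt_mul_of_one_lt_left (lucasU_succ_pos hp₀ hq n) hp
      _ ≤ p * lucasU p q (n + 1) + q * lucasU p q n :=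
          le_add_of_nonneg_right (mul_nonneg hq (lucasU_nonneg hp₀.le hq n))

end Ordered

theorem prime_of_prime_apply_of_isDvdSequence {f : ℕ → ℕ} (hf : IsDvdSequence f)
    (hinj : Function.Injective f) (hf₁ : f 1 = 1) {m : ℕ} (hm : (f m).Prime) : m.Prime := by
  have eq_one_or_self (a : ℕ) (ha : a ∣ m) : a = 1 ∨ a = m :=
    (hm.eq_one_or_self_of_dvd (f a) (hf a m ha)).imp
      (fun h ↦ hinj (h.trans hf₁.symm)) (fun h ↦ hinj h)
  have ne_zero : m ≠ 0 := by
    rintro rfl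
    simpa using eq_one_or_self 2 (dvd_zero 2)
  have ne_one : m ≠ 1 := by
    rintro rfl
    exact hm.ne_one hf₁
  exact Nat.prime_def.2 ⟨(Nat.two_le_iff m).2 ⟨ne_zero, ne_one⟩, eq_one_or_self⟩

theorem pell_eq_lucasU (n : ℕ) : pell n = lucasU 2 1 n := by
  induction n using Nat.twoStepInduction with
  | zero => rfl
  | one => rfl
  | more n ih₀ ih₁ => rw [pell, lucasU_add_two, ih₀, ih₁, one_mul]

theorem stmt_18_general {p q m : ℕ} (hp : 1 < p) (hm : (lucasU p q m).Prime) : m.Prime :=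
  prime_of_prime_apply_of_isDvdSequence (isDvdSequence_lucasU p q)
    (lucasU_strictMono hp q.zero_le).injective (lucasU_one p q) hm

/-- For every m ≥ 2, if the Pell number P(m) is prime, then m is prime. -/
theorem stmt_18 (m : ℕ) (hm : 2 ≤ m) (hp : Nat.Prime (pell m)) : Nat.Prime m :=
  stmt_18_general one_lt_two (pell_eq_lucasU m ▸ hp)
end
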